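/- Let K be a field and let A be a reduced finitely generated commutative K-algebra that is not regular, and let J = ∩{P : P ∈ Sing(A)} be the vanishing ideal of the singular locus. Then n(A, J) ≤ max over the (finitely many) strata W of Sing(A) of n(A, L_W). If in addition A is equidimensional and satisfies Serre's condition (S_2), then equality holds: n(A, J) = max over strata W of n(A, L_W). -/

import Mathlib

set_option synthInstance.maxHeartbeats 1000000
set_option maxHeartbeats 1000000

open scoped nonZeroDivisors

noncomputable section

/-- Given an intermediate ring `B` with `A ⊆ B ⊆ Q(A)` and an ideal `I` of `B`, the
endomorphism ring `End_B(I) = {x ∈ Q(A) : x·I ⊆ I}`, as a subalgebra of `Q(A)`. -/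
def endStep (A : Type*) [CommRing A] (B : Subalgebra A (FractionRing A))
    (I : Ideal B) : Subalgebra A (FractionRing A) where
  carrier := {x : FractionRing A | ∀ j ∈ I,
    x * (j : FractionRing A) ∈ (fun b : B => (b : FractionRing A)) '' I}
  mul_mem' := by
    intro x y hx hy j hj
    obtain ⟨j', hj', heq⟩ := hy j hj
    rw [mul_assoc, ← heq]
    exact hx j' hj'
  one_mem' := by
    intro j hj
    exact ⟨j, hj, (one_mul _).symm⟩
  add_mem' := by
    intro x y hx hy j hj
    obtain ⟨j1, hj1, h1⟩ := hx j hj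
    obtain ⟨j2, hj2, h2⟩ := hy j hj
    refine ⟨j1 + j2, I.add_mem hj1 hj2, ?_⟩
    push_cast
    rw [add_mul, ← h1, ← h2]
  zero_mem' := by
    intro j hj
    exact ⟨0, I.zero_mem, by push_cast; rw [zero_mul]⟩
  algebraMap_mem' := by
    intro a j hj
    refine ⟨algebraMap A B a * j, I.mul_mem_left _ hj, ?_⟩
    push_cast
    rfl

/-- The Grauert–Remmert normalization chain inside `Q(A)`:
`A_0 = A` (the image of `A` in `Q(A)`), and
`A_{i+1} = End_{A_i}(√(J·A_i))`. -/
def chainRing (A : Type*) [CommRing A] (J : Ideal A) :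
    ℕ → Subalgebra A (FractionRing A)
  | 0 => ⊥
  | n + 1 =>
      endStep A (chainRing A J n)
        ((J.map (algebraMap A (chainRing A J n))).radical)

/-- The number of steps of the Grauert–Remmert-type normalization algorithm:
the least `n` with `A_n = A_{n+1}`. -/
def nSteps (A : Type*) [CommRing A] (J : Ideal A) : ℕ :=
  sInf {n | chainRing A J n = chainRing A J (n + 1)}

/-- A Noetherian local ring is regular if its maximal ideal can be generated by
Krull-dimension-many elements. -/
def IsRegularLocal (R : Type*) [CommRing R] [IsLocalRing R] : Prop :=
  IsNoetherianRing R ∧ ∃ s : Finset R,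
    Ideal.span (s : Set R) = IsLocalRing.maximalIdeal R ∧
      (s.card : WithBot ℕ∞) = ringKrullDim R

/-- The singular locus of `A`. -/
def singLocus (A : Type*) [CommRing A] : Set (PrimeSpectrum A) :=
  {P | ¬ IsRegularLocal (Localization.AtPrime P.asIdeal)}

/-- For `P ∈ Sing(A)`, `L_P` is the intersection of all singular primes contained
in `P`. -/
def LP (A : Type*) [CommRing A] (P : PrimeSpectrum A) : Ideal A :=
  sInf {I | ∃ Q ∈ singLocus A, Q.asIdeal ≤ P.asIdeal ∧ I = Q.asIdeal}

/-- The vanishing ideal of the singular locus of `A`. -/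
def singIdeal (A : Type*) [CommRing A] : Ideal A :=
  sInf {I | ∃ P ∈ singLocus A, I = P.asIdeal}

/-- Serre's condition `(S₂)`. -/
def SerreS2 (A : Type*) [CommRing A] : Prop :=
  ∀ P : PrimeSpectrum A, ∀ n : ℕ, n ≤ 2 →
    (n : WithBot ℕ∞) ≤ ringKrullDim (Localization.AtPrime P.asIdeal) →
    ∃ rs : List (Localization.AtPrime P.asIdeal), rs.length = n ∧
      (∀ r ∈ rs, r ∈ IsLocalRing.maximalIdeal (Localization.AtPrime P.asIdeal)) ∧
      RingTheory.Sequence.IsRegular (Localization.AtPrime P.asIdeal) rs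

/-- `A` is equidimensional. -/
def Equidimensional (A : Type*) [CommRing A] : Prop :=
  (∀ P Q : Ideal A, P ∈ minimalPrimes A → Q ∈ minimalPrimes A →
      ringKrullDim (A ⧸ P) = ringKrullDim (A ⧸ Q)) ∧
    (∀ M N : PrimeSpectrum A, M.asIdeal.IsMaximal → N.asIdeal.IsMaximal →
      ringKrullDim (Localization.AtPrime M.asIdeal)
        = ringKrullDim (Localization.AtPrime N.asIdeal))


section ChainLemmas
variable {A : Type*} [CommRing A]

def gstep (A : Type*) [CommRing A] (J : Ideal A) (B : Subalgebra A (FractionRing A)) :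
    Subalgebra A (FractionRing A) :=
  endStep A B ((J.map (algebraMap A B)).radical)

lemma chainRing_succ (J : Ideal A) (n : ℕ) :
    chainRing A J (n+1) = gstep A J (chainRing A J n) := rfl

lemma mem_gstep {J : Ideal A} {B : Subalgebra A (FractionRing A)} {x : FractionRing A} :
    x ∈ gstep A J B ↔ ∀ j ∈ (J.map (algebraMap A B)).radical,
      ∃ y ∈ (J.map (algebraMap A B)).radical, (y : FractionRing A) = x * j := Iff.rfl

lemma le_gstep (J : Ideal A) (B : Subalgebra A (FractionRing A)) : B ≤ gstep A J B := by
  intro x hx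
  rw [mem_gstep]
  intro j hj
  exact ⟨⟨x, hx⟩ * j, Ideal.mul_mem_left _ _ hj, rfl⟩

lemma chainRing_mono (J : Ideal A) : Monotone (chainRing A J) :=
  monotone_nat_of_le_succ fun _ => le_gstep J _

lemma chainRing_const (J : Ideal A) {n : ℕ} (h : chainRing A J n = chainRing A J (n+1)) {m : ℕ}
    (hm : n ≤ m) : chainRing A J m = chainRing A J n := by
  induction m, hm using Nat.le_induction with
  | base => rfl
  | succ m hm ih => rw [chainRing_succ, ih, ← chainRing_succ, ← h]

lemma gstep_noeth (J : Ideal A) (B : Subalgebra A (FractionRing A)) [IsNoetherian A B]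
    (d : A) (hd : d ∈ J) (hd0 : d ∈ A⁰) : IsNoetherian A (gstep A J B) := by
  have key : ∀ x ∈ gstep A J B, d • x ∈ B := by
    intro x hx
    rw [mem_gstep] at hx
    obtain ⟨y, -, hy⟩ := hx (algebraMap A B d) (Ideal.le_radical (Ideal.mem_map_of_mem _ hd))
    have : d • x = y := by
      rw [hy, Algebra.smul_def, mul_comm]; rfl
    rw [this]; exact y.2
  let f : gstep A J B →ₗ[A] B :=
    { toFun := fun x => ⟨d • (x : FractionRing A), key x x.2⟩
      map_add' := fun x y => by ext; simp
      map_smul' := fun a x => Subtype.ext (smul_comm d a (x : FractionRing A)) }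
  refine isNoetherian_of_injective f ?_
  intro x y hxy
  have h : d • (x : FractionRing A) = d • (y : FractionRing A) := congrArg Subtype.val hxy
  rw [Algebra.smul_def, Algebra.smul_def] at h
  have hu : IsUnit (algebraMap A (FractionRing A) d) :=
    IsLocalization.map_units (FractionRing A) (⟨d, hd0⟩ : A⁰)
  exact Subtype.ext (hu.mul_left_cancel h)

lemma chainRing_noeth [IsNoetherianRing A] (J : Ideal A)
    (d : A) (hd : d ∈ J) (hd0 : d ∈ A⁰) (n : ℕ) : IsNoetherian A (chainRing A J n) := by
  induction n with
  | zero =>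
    change IsNoetherian A (⊥ : Subalgebra A (FractionRing A))
    refine isNoetherian_of_surjective (M := A) (f := (Algebra.linearMap A _)) ?_
    apply LinearMap.range_eq_top.2
    rintro ⟨x, hx⟩
    obtain ⟨a, rfl⟩ := Algebra.mem_bot.1 hx
    exact ⟨a, rfl⟩
  | succ n ih => exact gstep_noeth J _ d hd hd0

lemma chainRing_integral [IsNoetherianRing A] (J : Ideal A)
    (d : A) (hd : d ∈ J) (hd0 : d ∈ A⁰) (n : ℕ) :
    chainRing A J n ≤ integralClosure A (FractionRing A) := by
  intro x hx
  have := chainRing_noeth J d hd hd0 n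
  have h : IsIntegral A (⟨x, hx⟩ : chainRing A J n) := IsIntegral.of_finite A _
  exact h.map (chainRing A J n).val

lemma chainRing_stab [IsNoetherianRing A] [IsNoetherian A (integralClosure A (FractionRing A))]
    (J : Ideal A) (d : A) (hd : d ∈ J) (hd0 : d ∈ A⁰) :
    ∃ n, chainRing A J n = chainRing A J (n+1) := by
  let N := Subalgebra.toSubmodule (integralClosure A (FractionRing A))
  have hN : IsNoetherian A N := ‹_›
  let f : ℕ →o Submodule A N :=
    ⟨fun n => (Subalgebra.toSubmodule (chainRing A J n)).comap N.subtype, by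
      intro m n hmn x hx
      exact chainRing_mono J hmn hx⟩
  obtain ⟨n, hn⟩ := monotone_stabilizes_iff_noetherian.2 hN f
  refine ⟨n, le_antisymm (chainRing_mono J n.le_succ) ?_⟩
  intro x hx
  have hxN := chainRing_integral J d hd hd0 _ hx
  have : (⟨x, hxN⟩ : N) ∈ f (n+1) := hx
  rw [← hn (n+1) n.le_succ] at this
  exact this

lemma chainRing_nSteps [IsNoetherianRing A] [IsNoetherian A (integralClosure A (FractionRing A))]
    (J : Ideal A) (d : A) (hd : d ∈ J) (hd0 : d ∈ A⁰) :
    chainRing A J (nSteps A J) = chainRing A J (nSteps A J + 1) :=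
  Nat.sInf_mem (s := {n | chainRing A J n = chainRing A J (n + 1)}) (chainRing_stab J d hd hd0)

lemma chainRing_top (n : ℕ) : chainRing A (⊤ : Ideal A) n = ⊥ := by
  induction n with
  | zero => rfl
  | succ n ih =>
    rw [chainRing_succ, ih]
    refine le_antisymm ?_ bot_le
    intro x hx
    rw [mem_gstep] at hx
    obtain ⟨y, -, hy⟩ := hx 1 (Ideal.le_radical (by simp [Ideal.map_top]))
    have : x = y := by simpa using hy.symm
    rw [this]; exact y.2

/-- membership in the localized ideal -/
lemma map_loc (q : Ideal A) [q.IsPrime] (I I' : Ideal A) (B B' : Subalgebra A (FractionRing A))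
    (hI : ∃ s ∉ q, ∀ a ∈ I, s * a ∈ I')
    (hB : ∀ x ∈ B, ∃ s ∉ q, s • x ∈ B') (z : B) (hz : z ∈ I.map (algebraMap A B)) :
    ∃ s ∉ q, ∃ w ∈ I'.map (algebraMap A B'), (w : FractionRing A) = s • (z : FractionRing A) := by
  have hq : q.IsPrime := inferInstance
  obtain ⟨s0, hs0, hI⟩ := hI
  refine Submodule.span_induction (p := fun (z : B) _ => ∃ s ∉ q, ∃ w ∈ I'.map (algebraMap A B'),
    (w : FractionRing A) = s • (z : FractionRing A)) ?_ ?_ ?_ ?_ hz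
  · rintro _ ⟨a, ha, rfl⟩
    refine ⟨s0, hs0, algebraMap A B' (s0 * a), Ideal.mem_map_of_mem _ (hI a ha), ?_⟩
    rw [Algebra.smul_def]
    simp
  · exact ⟨1, q.ne_top_iff_one.1 hq.ne_top, 0, zero_mem _, by simp⟩
  · rintro x y - - ⟨s, hs, w, hw, e⟩ ⟨s', hs', w', hw', e'⟩
    refine ⟨s * s', fun h => (hq.mem_or_mem h).elim hs hs', s' • w + s • w', ?_, ?_⟩
    · exact add_mem (Submodule.smul_of_tower_mem _ _ hw) (Submodule.smul_of_tower_mem _ _ hw')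
    · push_cast
      rw [e, e', smul_add, smul_smul, smul_smul, mul_comm s']
  · rintro b x - ⟨s, hs, w, hw, e⟩
    obtain ⟨t, ht, hb⟩ := hB b b.2
    refine ⟨t * s, fun h => (hq.mem_or_mem h).elim ht hs, ⟨_, hb⟩ * w, Ideal.mul_mem_left _ _ hw, ?_⟩
    push_cast
    rw [e, smul_mul_smul_comm]; rfl

lemma radical_loc (q : Ideal A) [q.IsPrime] (I I' : Ideal A)
    (B B' : Subalgebra A (FractionRing A))
    (hI : ∃ s ∉ q, ∀ a ∈ I, s * a ∈ I')
    (hB : ∀ x ∈ B, ∃ s ∉ q, s • x ∈ B') (z : B) (hz : z ∈ (I.map (algebraMap A B)).radical) :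
    ∃ s ∉ q, ∃ w ∈ (I'.map (algebraMap A B')).radical,
      (w : FractionRing A) = s • (z : FractionRing A) := by
  have hq : q.IsPrime := inferInstance
  obtain ⟨k, hk⟩ := hz
  obtain ⟨s, hs, w, hw, e⟩ := map_loc q I I' B B' hI hB _ hk
  obtain ⟨t, ht, hb⟩ := hB z z.2
  refine ⟨s * t, fun h => (hq.mem_or_mem h).elim hs ht, s • ⟨_, hb⟩, ?_, ?_⟩
  · refine ⟨k + 1, ?_⟩
    have : (s • (⟨t • (z : FractionRing A), hb⟩ : B')) ^ (k+1)
        = (s ^ k * t ^ k) • (w * (⟨t • (z : FractionRing A), hb⟩ : B')) := by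
      apply Subtype.ext
      push_cast
      rw [e]
      simp only [Algebra.smul_def, map_mul, map_pow]
      push_cast
      ring
    rw [this]
    exact Submodule.smul_of_tower_mem _ _ (Ideal.mul_mem_right _ _ hw)
  · push_cast; rw [smul_smul]

lemma gstep_loc (q : Ideal A) [q.IsPrime] (I I' : Ideal A)
    (B B' : Subalgebra A (FractionRing A)) [IsNoetherian A B']
    (hI : ∃ s ∉ q, ∀ a ∈ I, s * a ∈ I') (hI' : ∃ s ∉ q, ∀ a ∈ I', s * a ∈ I)
    (hB : ∀ x ∈ B, ∃ s ∉ q, s • x ∈ B') (hB' : ∀ x ∈ B', ∃ s ∉ q, s • x ∈ B)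
    (x : FractionRing A) (hx : x ∈ gstep A I B) : ∃ s ∉ q, s • x ∈ gstep A I' B' := by
  have hq : q.IsPrime := inferInstance
  rw [mem_gstep] at hx
  classical
  let R' := ((I'.map (algebraMap A B')).radical).restrictScalars A
  obtain ⟨S, hS⟩ : R'.FG := IsNoetherian.noetherian R'
  have h1 : ∀ j ∈ R', ∃ s ∉ q, ∃ y ∈ R', (y : FractionRing A) = s • (x * j) := by
    intro j hj
    obtain ⟨s, hs, w, hw, e⟩ := radical_loc q I' I B' B hI' hB' j hj
    obtain ⟨y, hy, e2⟩ := hx w hw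
    obtain ⟨t, ht, v, hv, e3⟩ := radical_loc q I I' B B' hI hB y hy
    refine ⟨t * s, fun h => (hq.mem_or_mem h).elim ht hs, v, hv, ?_⟩
    rw [e3, e2, e, mul_smul_comm, smul_smul]
  choose! s hs y hy e using h1
  refine ⟨∏ j ∈ S, s j, ?_, ?_⟩
  · intro h
    obtain ⟨j, hj, h⟩ := (hq.prod_mem_iff).1 h
    exact hs j (hS ▸ Submodule.subset_span hj) h
  · rw [mem_gstep]
    intro j hj
    have hj : j ∈ R' := hj
    rw [← hS] at hj
    change ∃ y ∈ R', _
    refine Submodule.span_induction (p := fun (j : B') _ => ∃ y ∈ R', (y : FractionRing A) =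
      ((∏ j ∈ S, s j) • x) * (j : FractionRing A)) ?_ ?_ ?_ ?_ hj
    · intro j hj
      refine ⟨(∏ i ∈ S.erase j, s i) • y j, Submodule.smul_mem _ _ (hy j (hS ▸ Submodule.subset_span hj)), ?_⟩
      rw [← Finset.prod_erase_mul _ _ hj]
      push_cast
      rw [e j (hS ▸ Submodule.subset_span hj), smul_smul, smul_mul_assoc]
    · exact ⟨0, zero_mem _, by simp⟩
    · rintro u v - - ⟨y, hy, e⟩ ⟨y', hy', e'⟩
      exact ⟨y + y', add_mem hy hy', by push_cast; rw [e, e', mul_add]⟩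
    · rintro a u - ⟨y, hy, e⟩
      exact ⟨a • y, Submodule.smul_mem _ _ hy, by push_cast; rw [e, mul_smul_comm]⟩

lemma chainRing_loc [IsNoetherianRing A] (q : Ideal A) [q.IsPrime] (I I' : Ideal A)
    (d : A) (hd : d ∈ I) (hd' : d ∈ I') (hd0 : d ∈ A⁰)
    (hI : ∃ s ∉ q, ∀ a ∈ I, s * a ∈ I') (hI' : ∃ s ∉ q, ∀ a ∈ I', s * a ∈ I) (n : ℕ) :
    (∀ x ∈ chainRing A I n, ∃ s ∉ q, s • x ∈ chainRing A I' n) ∧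
    (∀ x ∈ chainRing A I' n, ∃ s ∉ q, s • x ∈ chainRing A I n) := by
  have hq : q.IsPrime := inferInstance
  induction n with
  | zero =>
    have : ∀ x ∈ (⊥ : Subalgebra A (FractionRing A)), ∃ s ∉ q,
        s • x ∈ (⊥ : Subalgebra A (FractionRing A)) :=
      fun x hx => ⟨1, q.ne_top_iff_one.1 hq.ne_top, by simpa using hx⟩
    exact ⟨this, this⟩
  | succ n ih =>
    have := chainRing_noeth I d hd hd0 n
    have := chainRing_noeth I' d hd' hd0 n
    exact ⟨gstep_loc q I I' _ _ hI hI' ih.1 ih.2, gstep_loc q I' I _ _ hI' hI ih.2 ih.1⟩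

/-- codimension-one saturation is preserved along the chain -/
lemma gstep_sat (J : Ideal A) (B : Subalgebra A (FractionRing A)) (𝒬 : Set (Ideal A))
    (hprime : ∀ q ∈ 𝒬, q.IsPrime)
    (hB : ∀ x : FractionRing A, (∀ q ∈ 𝒬, ∃ s ∉ q, s • x ∈ B) → x ∈ B)
    (x : FractionRing A) (hx : ∀ q ∈ 𝒬, ∃ s ∉ q, s • x ∈ gstep A J B) : x ∈ gstep A J B := by
  rw [mem_gstep]
  intro j hj
  have key : ∀ l : ℕ, x ^ l * j ∈ B := by
    intro l
    apply hB
    intro q hq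
    obtain ⟨s, hs, h⟩ := hx q hq
    have hp := hprime q hq
    refine ⟨s ^ l, fun h => hs (hp.mem_of_pow_mem _ h), ?_⟩
    have := pow_mem h l
    rw [mem_gstep] at this
    obtain ⟨y, -, e⟩ := this j hj
    rw [smul_pow, smul_mul_assoc] at e
    rw [← e]; exact y.2
  have k1 := key 1
  rw [pow_one] at k1
  refine ⟨⟨_, k1⟩, ?_, rfl⟩
  have : (⟨x * j, k1⟩ : B) ^ 2 = ⟨_, key 2⟩ * j := by
    ext; push_cast; ring
  have h2 : (⟨x * j, k1⟩ : B) ^ 2 ∈ (J.map (algebraMap A B)).radical := by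
    rw [this]; exact Ideal.mul_mem_left _ _ hj
  rw [← Ideal.radical_idem]
  exact ⟨2, h2⟩

lemma chainRing_sat (J : Ideal A) (𝒬 : Set (Ideal A))
    (hprime : ∀ q ∈ 𝒬, q.IsPrime)
    (hB : ∀ x : FractionRing A, (∀ q ∈ 𝒬, ∃ s ∉ q,
      s • x ∈ (⊥ : Subalgebra A (FractionRing A))) → x ∈ (⊥ : Subalgebra A (FractionRing A)))
    (n : ℕ) (x : FractionRing A) (hx : ∀ q ∈ 𝒬, ∃ s ∉ q, s • x ∈ chainRing A J n) :
    x ∈ chainRing A J n := by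
  induction n generalizing x with
  | zero => exact hB x hx
  | succ n ih => exact gstep_sat J _ 𝒬 hprime ih x hx

end ChainLemmas

section Normalization

lemma noeth_of_sep {B F L : Type*} [CommRing B] [IsDomain B] [IsNoetherianRing B] [Field F]
    [Algebra B F] [IsFractionRing B F] [AddCommGroup L] [Module F L] [Module B L]
    [IsScalarTower B F L] [FiniteDimensional F L] (C : Submodule B L)
    (h : ∀ y : C, y ≠ 0 → ∃ ψ : C →ₗ[B] B, ψ y ≠ 0) : IsNoetherian B C := by
  classical
  let V : Finset (C →ₗ[B] B) → Submodule F L := fun S =>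
    Submodule.span F (Subtype.val '' {c : C | ∀ ψ ∈ S, ψ c = 0})
  let S := Function.argmin (fun S => Module.finrank F (V S))
  have hS : ∀ S', Module.finrank F (V S) ≤ Module.finrank F (V S') :=
    fun S' => Function.argmin_le (fun S => Module.finrank F (V S)) S'
  have hker : ∀ c : C, (∀ ψ ∈ S, ψ c = 0) → c = 0 := by
    intro y hy
    by_contra hy0
    obtain ⟨ψ, hψ⟩ := h y hy0
    have hle : V (insert ψ S) ≤ V S := by
      apply Submodule.span_mono
      apply Set.image_mono
      intro c hc ψ' hψ'
      exact hc ψ' (Finset.mem_insert_of_mem hψ')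
    have heq := Submodule.eq_of_le_of_finrank_le hle (hS _)
    have hyV : (y : L) ∈ V (insert ψ S) := by
      rw [heq]; exact Submodule.subset_span ⟨y, hy, rfl⟩
    have claim : ∀ v ∈ V (insert ψ S), ∃ b : B, b ≠ 0 ∧ ∃ c : C, ψ c = 0 ∧ b • v = c := by
      intro v hv
      refine Submodule.span_induction (p := fun (v : L) _ => ∃ b : B, b ≠ 0 ∧ ∃ c : C, ψ c = 0 ∧ b • v = c)
        ?_ ?_ ?_ ?_ (show v ∈ Submodule.span F _ from hv)
      · rintro _ ⟨c, hc, rfl⟩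
        exact ⟨1, one_ne_zero, c, hc ψ (Finset.mem_insert_self _ _), one_smul _ _⟩
      · exact ⟨1, one_ne_zero, 0, map_zero _, by simp⟩
      · rintro x y - - ⟨b, hb, c, hc, e⟩ ⟨b', hb', c', hc', e'⟩
        refine ⟨b * b', mul_ne_zero hb hb', b' • c + b • c', by simp [hc, hc'], ?_⟩
        push_cast
        rw [← e, ← e', smul_add, smul_smul, smul_smul, mul_comm b']
      · rintro f x - ⟨b, hb, c, hc, e⟩
        obtain ⟨⟨a, s⟩, hs⟩ := IsLocalization.surj (nonZeroDivisors B) f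
        refine ⟨s * b, mul_ne_zero (nonZeroDivisors.ne_zero s.2) hb, a • c, by simp [hc], ?_⟩
        push_cast
        rw [← e, smul_comm (s * b : B) f x, smul_smul a, ← algebraMap_smul F (s * b : B) x, ← algebraMap_smul F (a * b),
          smul_smul]
        congr 1
        rw [map_mul, map_mul, ← hs]; ring
    obtain ⟨b, hb, c, hc, e⟩ := claim _ hyV
    have : b • y = c := Subtype.ext e
    have h2 : b * ψ y = 0 := by rw [← smul_eq_mul, ← map_smul, this, hc]
    exact (mul_ne_zero hb hψ) h2
  let Φ : C →ₗ[B] (S → B) := LinearMap.pi fun ψ => ψ.1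
  refine isNoetherian_of_injective Φ ?_
  rw [← LinearMap.ker_eq_bot, LinearMap.ker_eq_bot']
  intro c hc
  exact hker c fun ψ hψ => congrFun hc ⟨ψ, hψ⟩

lemma field_functional {K M : Type*} [Field K] [Field M] (g : K →+* M) (m : M) (hm : m ≠ 0) :
    ∃ l : M →+ K, (∀ c a, l (g c * a) = c * l a) ∧ l m ≠ 0 := by
  let := g.toAlgebra
  by_contra hcon
  push Not at hcon
  apply hm
  rw [← Module.forall_dual_apply_eq_zero_iff K m]
  intro f
  refine hcon f.toAddMonoidHom ?_
  intro c a
  have := f.map_smul c a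
  rwa [Algebra.smul_def] at this

lemma frob_functional {K σ : Type*} [Field K] (p n : ℕ) [ExpChar K p] (y : MvPolynomial σ K)
    (hy : y ≠ 0) : ∃ φ : MvPolynomial σ K →+ MvPolynomial σ K,
      (∀ b f, φ (b ^ p ^ n * f) = b * φ f) ∧ φ y ≠ 0 := by
  classical
  set q := p ^ n with hq
  have hq0 : 0 < q := expChar_pow_pos K p n
  obtain ⟨M, hM⟩ := MvPolynomial.ne_zero_iff.1 hy
  let m0 : σ →₀ ℕ := M.mapRange (fun i => i % q) (Nat.zero_mod _)
  let m1 : σ →₀ ℕ := M.mapRange (fun i => i / q) (Nat.zero_div _)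
  have hm : q • m1 + m0 = M := by
    ext i
    simp [m0, m1, Nat.div_add_mod]
  have hlt : ∀ i, m0 i < q := fun i => by simpa [m0] using Nat.mod_lt _ hq0
  obtain ⟨l, hl, hl0⟩ := field_functional (iterateFrobenius K p n) _ hM
  have hinj : Function.Injective (fun m : σ →₀ ℕ => q • m + m0) := by
    intro a b hab
    ext i
    have := DFunLike.congr_fun hab i
    simp at this
    exact this.resolve_right hq0.ne'
  let T : MvPolynomial σ K → MvPolynomial σ K := fun f => AddMonoidAlgebra.ofCoeff
    ((Finsupp.comapDomain (fun m : σ →₀ ℕ => q • m + m0) (AddMonoidAlgebra.coeff f)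
      hinj.injOn).mapRange l (map_zero l))
  have hT : ∀ f m, MvPolynomial.coeff m (T f) = l (MvPolynomial.coeff (q • m + m0) f) := by
    intro f m
    simp [T, MvPolynomial.coeff]
  let φ : MvPolynomial σ K →+ MvPolynomial σ K := AddMonoidHom.mk' T (by
    intro a b
    ext m
    rw [MvPolynomial.coeff_add, hT, hT, hT, MvPolynomial.coeff_add, map_add])
  refine ⟨φ, ?_, ?_⟩
  · intro b f
    induction b using MvPolynomial.induction_on' with
    | monomial u c =>
      ext m
      rw [MvPolynomial.monomial_pow, MvPolynomial.coeff_monomial_mul']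
      change MvPolynomial.coeff m (T _) = _
      rw [hT, MvPolynomial.coeff_monomial_mul']
      have hiff : q • u ≤ q • m + m0 ↔ u ≤ m := by
        constructor
        · intro h i
          have := h i
          simp at this
          by_contra hc
          push Not at hc
          have h1 := hlt i
          have : q * (m i + 1) ≤ q * u i := Nat.mul_le_mul_left _ hc
          rw [mul_add] at this
          omega
        · intro h i
          have := h i
          simp
          exact (Nat.mul_le_mul_left _ this).trans (Nat.le_add_right _ _)
      by_cases hum : u ≤ m
      · rw [if_pos (hiff.2 hum), if_pos hum]
        change _ = _ * MvPolynomial.coeff _ (T f)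
        rw [hT]
        have : q • m + m0 - q • u = q • (m - u) + m0 := by
          ext i
          have := hum i
          simp
          rw [Nat.mul_sub]
          have := Nat.mul_le_mul_left q this
          omega
        rw [this, ← hl, iterateFrobenius_def]
      · rw [if_neg (fun h => hum (hiff.1 h)), if_neg hum, map_zero]
    | add a b iha ihb =>
      rw [hq, add_pow_expChar_pow, add_mul, map_add, ← hq, iha, ihb, add_mul]
  · intro h
    apply hl0
    have : MvPolynomial.coeff m1 (T y) = 0 := by
      change MvPolynomial.coeff m1 (φ y) = 0
      rw [h]; simp
    rwa [hT, hm] at this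

lemma noeth_integralClosure_mvPoly {K σ L : Type*} [Field K] [Finite σ] [Field L]
    [Algebra (MvPolynomial σ K) L] [Algebra (FractionRing (MvPolynomial σ K)) L]
    [IsScalarTower (MvPolynomial σ K) (FractionRing (MvPolynomial σ K)) L]
    [FiniteDimensional (FractionRing (MvPolynomial σ K)) L] :
    IsNoetherian (MvPolynomial σ K) (integralClosure (MvPolynomial σ K) L) := by
  let B := MvPolynomial σ K
  let F := FractionRing B
  let E := separableClosure F L
  let p := ringExpChar K
  have hBEL : IsScalarTower B E L := IsScalarTower.of_algebraMap_eq fun b => by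
    rw [IsScalarTower.algebraMap_apply B F L, IsScalarTower.algebraMap_apply B F E]; rfl
  have : ExpChar K p := ringExpChar.expChar K
  have : ExpChar B p := expChar_of_injective_algebraMap (FaithfulSMul.algebraMap_injective K B) p
  have : ExpChar F p := expChar_of_injective_algebraMap (FaithfulSMul.algebraMap_injective B F) p
  have : ExpChar E p := expChar_of_injective_algebraMap (FaithfulSMul.algebraMap_injective F E) p
  let n := IsPurelyInseparable.exponent E L
  let Fr : L →+* E := IsPurelyInseparable.iterateFrobenius E L p (n := n) le_rfl
  have hFr : ∀ a, algebraMap E L (Fr a) = a ^ p ^ n :=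
    IsPurelyInseparable.algebraMap_iterateFrobenius E p le_rfl
  have hFrB : ∀ b : B, Fr (algebraMap B L b) = algebraMap B E (b ^ p ^ n) := by
    intro b
    apply (algebraMap E L).injective
    rw [hFr, map_pow, map_pow, ← IsScalarTower.algebraMap_apply B E L]
  have hint : ∀ c : L, IsIntegral B c → IsIntegral B (Fr c) := by
    intro c hc
    rw [← isIntegral_algebraMap_iff (algebraMap E L).injective, hFr]
    exact hc.pow _
  refine noeth_of_sep (F := F) (Subalgebra.toSubmodule (integralClosure B L)) ?_
  rintro ⟨y, hy⟩ hy0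
  have hy0 : y ≠ 0 := fun h => hy0 (Subtype.ext h)
  have hFy : Fr y ≠ 0 := by simpa using hy0
  obtain ⟨e, he, hte⟩ : ∃ e : E, IsIntegral B e ∧ Algebra.trace F E (Fr y * e) ≠ 0 := by
    obtain ⟨e0, he0⟩ : ∃ e0 : E, Algebra.trace F E (Fr y * e0) ≠ 0 := by
      by_contra hcon
      push Not at hcon
      exact hFy ((traceForm_nondegenerate F E).1 _ hcon)
    have halg : IsAlgebraic B e0 := by
      have : IsAlgebraic F e0 := Algebra.IsAlgebraic.isAlgebraic e0
      exact (IsFractionRing.isAlgebraic_iff B F E).2 this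
    obtain ⟨b, hb, hbi⟩ := halg.exists_integral_multiple
    refine ⟨b • e0, hbi, ?_⟩
    rw [mul_smul_comm, ← algebraMap_smul F b, map_smul, smul_eq_mul]
    exact mul_ne_zero (by simpa using hb) he0
  have hex : ∀ c : L, IsIntegral B c → ∃ b : B, algebraMap B F b = Algebra.trace F E (Fr c * e) := by
    intro c hc
    exact IsIntegrallyClosed.isIntegral_iff.1 (Algebra.isIntegral_trace ((hint c hc).mul he))
  choose! t ht using hex
  have hinjBF := FaithfulSMul.algebraMap_injective B F
  have hty : t y ≠ 0 := by
    intro h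
    apply hte
    rw [← ht y hy, h, map_zero]
  obtain ⟨φ, hφ, hφy⟩ := frob_functional p n (t y) hty
  refine ⟨⟨⟨fun c => φ (t c), ?_⟩, ?_⟩, hφy⟩
  · rintro ⟨c, hc⟩ ⟨c', hc'⟩
    change φ (t (c + c')) = φ (t c) + φ (t c')
    rw [← map_add]
    congr 1
    apply hinjBF
    have hc : IsIntegral B c := hc
    have hc' : IsIntegral B c' := hc'
    rw [map_add, ht _ hc, ht _ hc', ht _ (hc.add hc'), map_add, add_mul, map_add]
  · rintro b ⟨c, hc⟩
    have hc : IsIntegral B c := hc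
    change φ (t (b • c)) = b * φ (t c)
    rw [← hφ]
    congr 1
    apply hinjBF
    rw [map_mul, ht _ hc, ht _ (hc.smul b), Algebra.smul_def, map_mul Fr, hFrB, mul_assoc,
      ← Algebra.smul_def, ← algebraMap_smul F (b ^ p ^ n), map_smul, smul_eq_mul]

lemma noeth_integralClosure_domain (K A : Type*) [Field K] [CommRing A] [IsDomain A] [Algebra K A]
    [Algebra.FiniteType K A] : IsNoetherian A (integralClosure A (FractionRing A)) := by
  obtain ⟨s, g, hg, hfin⟩ := exists_finite_inj_algHom_of_fg K A
  let B := MvPolynomial (Fin s) K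
  let : Algebra B A := g.toRingHom.toAlgebra
  let L := FractionRing A
  have : FaithfulSMul B A := (faithfulSMul_iff_algebraMap_injective B A).2 hg
  have : Module.Finite B A := hfin
  have : IsScalarTower B A L := inferInstance
  have : FaithfulSMul B L := (faithfulSMul_iff_algebraMap_injective B L).2
    ((FaithfulSMul.algebraMap_injective A L).comp hg)
  let : Algebra (FractionRing B) L := FractionRing.liftAlgebra B L
  have : IsScalarTower B (FractionRing B) L := inferInstance
  have : FiniteDimensional (FractionRing B) L := by
    have h1 : Algebra.QuasiFinite B L := Algebra.QuasiFinite.of_isLocalization (S := A) A⁰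
    have h2 : Algebra.QuasiFinite (FractionRing B) L :=
      Algebra.QuasiFinite.of_restrictScalars B (FractionRing B) L
    exact Module.Finite.of_quasiFinite
  have h := noeth_integralClosure_mvPoly (K := K) (σ := Fin s) (L := L)
  have hint : Algebra.IsIntegral B A := inferInstance
  let f : (integralClosure A L) →ₗ[B] integralClosure B L :=
    { toFun := fun x => ⟨x, isIntegral_trans (R := B) (A := A) _ x.2⟩
      map_add' := fun _ _ => rfl
      map_smul' := fun _ _ => rfl }
  have h2 : IsNoetherian B (integralClosure A L) :=
    isNoetherian_of_injective f (fun x y hxy => Subtype.ext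
      (congrArg (fun z : integralClosure B L => (z : L)) hxy))
  exact isNoetherian_of_tower B h2

lemma isNoeth_quot {A M : Type*} [CommRing A] [IsNoetherianRing A] (p : Ideal A) [AddCommGroup M] [Module A M]
    [Module (A ⧸ p) M] [IsScalarTower A (A ⧸ p) M] (h : IsNoetherian (A ⧸ p) M) :
    IsNoetherian A M := by
  have := h
  have : Module.Finite (A ⧸ p) M := inferInstance
  have : Module.Finite A M := Module.Finite.trans (A ⧸ p) M
  infer_instance

lemma noeth_integralClosure (K A : Type*) [Field K] [CommRing A] [IsReduced A] [Algebra K A]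
    [Algebra.FiniteType K A] : IsNoetherian A (integralClosure A (FractionRing A)) := by
  have : IsNoetherianRing A := Algebra.FiniteType.isNoetherianRing K A
  let ι := minimalPrimes A
  have : Finite ι := (minimalPrimes.finite_of_isNoetherianRing A)
  have hp : ∀ p : ι, p.1.IsPrime := fun p => Ideal.IsMinimalPrime.isPrime p.2
  let L : ι → Type _ := fun p => FractionRing (A ⧸ p.1)
  have hu : ∀ p : ι, ∀ s : A⁰, IsUnit (algebraMap A (L p) s) := by
    intro p s
    have : algebraMap A (L p) s ≠ 0 := by
      rw [IsScalarTower.algebraMap_apply A (A ⧸ p.1) (L p)]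
      intro h
      have h2 := (FaithfulSMul.algebraMap_injective (A ⧸ p.1) (L p)) (h.trans (map_zero _).symm)
      have h3 : (s : A) ∈ p.1 := Ideal.Quotient.eq_zero_iff_mem.1 h2
      exact Set.disjoint_left.1 (Ideal.disjoint_nonZeroDivisors_of_mem_minimalPrimes p.2) h3 s.2
    exact this.isUnit
  let g : ∀ p : ι, FractionRing A →ₐ[A] L p := fun p =>
    IsLocalization.liftAlgHom (M := A⁰) (f := Algebra.ofId A (L p)) (hu p)
  have hN : ∀ p : ι, IsNoetherian A (integralClosure (A ⧸ p.1) (L p)) := by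
    intro p
    have : Algebra.FiniteType K (A ⧸ p.1) := inferInstance
    have := noeth_integralClosure_domain K (A ⧸ p.1)
    exact isNoeth_quot p.1 this
  let f : integralClosure A (FractionRing A) →ₗ[A] (∀ p : ι, integralClosure (A ⧸ p.1) (L p)) :=
    LinearMap.pi fun p =>
      { toFun := fun x => ⟨g p x, (IsIntegral.map (g p) x.2).tower_top⟩
        map_add' := fun x y => Subtype.ext (map_add (g p) x.1 y.1)
        map_smul' := fun a x => Subtype.ext (map_smul (g p) a x.1) }
  refine isNoetherian_of_injective f ?_
  rw [← LinearMap.ker_eq_bot, LinearMap.ker_eq_bot']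
  rintro ⟨x, hx⟩ h
  have h1 : ∀ p : ι, g p x = 0 := fun p => congrArg Subtype.val (congrFun h p)
  obtain ⟨⟨a, s⟩, hs⟩ := IsLocalization.surj A⁰ x
  have ha : ∀ p : ι, a ∈ p.1 := by
    intro p
    have h2 : g p (algebraMap A _ a) = 0 := by rw [← hs, map_mul, h1, zero_mul]
    rw [AlgHom.commutes, IsScalarTower.algebraMap_apply A (A ⧸ p.1) (L p)] at h2
    have h2 := (FaithfulSMul.algebraMap_injective (A ⧸ p.1) (L p)) (h2.trans (map_zero _).symm)
    exact Ideal.Quotient.eq_zero_iff_mem.1 h2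
  have ha0 : a = 0 := by
    have : a ∈ sInf (minimalPrimes A) := by
      rw [Submodule.mem_sInf]; exact fun p hp => ha ⟨p, hp⟩
    rw [minimalPrimes, Ideal.sInf_minimalPrimes] at this
    have h0 : a ∈ nilradical A := this
    rw [nilradical_eq_zero] at h0
    exact h0
  apply Subtype.ext
  change x = 0
  have hsu : IsUnit (algebraMap A (FractionRing A) s) := IsLocalization.map_units _ s
  apply hsu.mul_right_cancel
  rw [hs, ha0]; simp

end Normalization

section FSmooth
open MvPolynomial KaehlerDifferential TensorProduct

lemma one_tmul_D_eq_zero_iff {k L : Type*} [Field k] [Field L] [Algebra k L] {σ : Type*}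
    [Algebra (MvPolynomial σ k) L] [IsScalarTower k (MvPolynomial σ k) L]
    (x : MvPolynomial σ k) :
    (1 : L) ⊗ₜ[MvPolynomial σ k] D k (MvPolynomial σ k) x = 0 ↔
      ∀ i, algebraMap (MvPolynomial σ k) L (pderiv i x) = 0 := by
  let b := (mvPolynomialBasis k σ).baseChange L
  have key : ∀ i, b.repr ((1 : L) ⊗ₜ[MvPolynomial σ k] D k (MvPolynomial σ k) x) i
      = algebraMap (MvPolynomial σ k) L (pderiv i x) := by
    intro i
    simp [b, Module.Basis.baseChange_repr_tmul, Algebra.smul_def, mvPolynomialBasis_repr_apply]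
  rw [← b.repr.map_eq_zero_iff]
  constructor
  · intro h i
    rw [← key, h]; rfl
  · intro h
    ext i
    rw [key, h]; rfl

lemma mem_sq_iff {k L : Type*} [Field k] [PerfectField k] [Field L] [Algebra k L]
    [Algebra.EssFiniteType k L]
    [Algebra (MvPolynomial L k) L] [IsScalarTower k (MvPolynomial L k) L]
    (hs : Function.Surjective (algebraMap (MvPolynomial L k) L))
    (x : MvPolynomial L k) (hx : x ∈ RingHom.ker (algebraMap (MvPolynomial L k) L))
    (h : ∀ i, algebraMap (MvPolynomial L k) L (pderiv i x) = 0) :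
    x ∈ (RingHom.ker (algebraMap (MvPolynomial L k) L)) ^ 2 := by
  have h0 : Subsingleton (Algebra.H1Cotangent k L) := by
    have : Algebra.FormallySmooth k L := inferInstance
    infer_instance
  have hi := (Algebra.FormallySmooth.kerCotangentToTensor_injective_iff (R := k) hs).2 h0
  rw [← Ideal.toCotangent_eq_zero _ ⟨x, hx⟩]
  apply hi
  rw [map_zero, kerCotangentToTensor_toCotangent]
  exact (one_tmul_D_eq_zero_iff x).2 h

lemma formallySmooth_field (k L : Type*) [Field k] [PerfectField k] [Field L] [Algebra k L] :
    Algebra.FormallySmooth k L := by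
  rw [Algebra.formallySmooth_iff]
  refine ⟨inferInstance, ?_⟩
  let P := MvPolynomial L k
  let : Algebra P L := (aeval (id : L → L)).toAlgebra
  have hmap : ∀ x : P, algebraMap P L x = aeval (id : L → L) x := fun _ => rfl
  have : IsScalarTower k P L := IsScalarTower.of_algebraMap_eq
    (fun x => ((aeval (id : L → L)).commutes x).symm)
  have hs : Function.Surjective (algebraMap P L) := fun y => ⟨X y, by simp [hmap]⟩
  rw [← Algebra.FormallySmooth.kerCotangentToTensor_injective_iff hs,
    injective_iff_map_eq_zero]
  intro y hy
  obtain ⟨⟨x, hx⟩, rfl⟩ := Ideal.toCotangent_surjective _ y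
  rw [kerCotangentToTensor_toCotangent] at hy
  have hy' := (one_tmul_D_eq_zero_iff x).1 hy
  rw [Ideal.toCotangent_eq_zero]
  change x ∈ _
  -- descend to a finitely generated subfield
  let L0 := IntermediateField.adjoin k (x.vars : Set L)
  have hvars : (x.vars : Set L) ⊆ Set.range (Subtype.val : L0 → L) := by
    intro v hv
    exact ⟨⟨v, IntermediateField.subset_adjoin k _ hv⟩, rfl⟩
  have hess : Algebra.EssFiniteType k L0 := by
    have : (IntermediateField.adjoin k (x.vars : Set L)).FG := ⟨x.vars, rfl⟩
    exact IntermediateField.essFiniteType_iff.2 this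
  obtain ⟨x0, hx0⟩ := exists_rename_eq_of_vars_subset_range x (Subtype.val : L0 → L)
    Subtype.val_injective hvars
  let : Algebra (MvPolynomial L0 k) L0 := (aeval (id : L0 → L0)).toAlgebra
  have hmap0 : ∀ x : MvPolynomial L0 k, algebraMap (MvPolynomial L0 k) L0 x
      = aeval (id : L0 → L0) x := fun _ => rfl
  have : IsScalarTower k (MvPolynomial L0 k) L0 :=
    IsScalarTower.of_algebraMap_eq' (by ext; simp [hmap0])
  have hs0 : Function.Surjective (algebraMap (MvPolynomial L0 k) L0) :=
    fun y => ⟨X y, by simp [hmap0]⟩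
  have hcomm : ∀ z : MvPolynomial L0 k, algebraMap P L (rename Subtype.val z)
      = (algebraMap (MvPolynomial L0 k) L0 z : L) := by
    intro z
    rw [hmap, hmap0, aeval_rename]
    have : (aeval (id ∘ (Subtype.val : L0 → L)) : MvPolynomial L0 k →ₐ[k] L)
      = L0.val.comp (aeval (id : L0 → L0)) := by ext; simp
    rw [this]; rfl
  have hx0k : x0 ∈ RingHom.ker (algebraMap (MvPolynomial L0 k) L0) := by
    rw [RingHom.mem_ker]
    apply Subtype.val_injective
    rw [← hcomm, hx0]; exact hx
  have h2 := mem_sq_iff hs0 x0 hx0k (by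
    intro i
    apply Subtype.val_injective
    rw [← hcomm, ← pderiv_rename Subtype.val_injective, hx0]
    exact hy' _)
  have h3 := Ideal.mem_map_of_mem (rename (Subtype.val : L0 → L) : MvPolynomial L0 k →ₐ[k] P) h2
  rw [Ideal.map_pow, hx0] at h3
  refine Ideal.pow_right_mono ?_ 2 h3
  rw [Ideal.map_le_iff_le_comap]
  intro z hz
  rw [Ideal.mem_comap, RingHom.mem_ker]
  refine (hcomm z).trans ?_
  rw [RingHom.mem_ker] at hz
  rw [hz]; rfl

end FSmooth

section Jac
open KaehlerDifferential TensorProduct IsLocalRing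

lemma exists_perfect_sub (K : Type*) [Field K] :
    ∃ (k : Type) (_ : Field k) (_ : PerfectField k), Nonempty (Algebra k K) := by
  obtain ⟨p, hp⟩ := CharP.exists K
  rcases CharP.char_is_prime_or_zero K p with h | h
  · have : Fact p.Prime := ⟨h⟩
    exact ⟨ZMod p, inferInstance, inferInstance, ⟨ZMod.algebra K p⟩⟩
  · subst h
    have : CharZero K := CharP.charP_to_charZero K
    exact ⟨ℚ, inferInstance, inferInstance, ⟨inferInstance⟩⟩

lemma proj_key {P Ω κ : Type*} [CommRing P] [AddCommGroup Ω] [Module P Ω] [Module.Projective P Ω]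
    [Field κ] [Algebra P κ] {ι : Type*} [Fintype ι] (ω : ι → Ω) (c : ι → κ)
    (h : ∀ l : Ω →ₗ[P] P, ∑ j, c j * algebraMap P κ (l (ω j)) = 0)
    (g : Ω →ₗ[P] κ) : ∑ j, c j * g (ω j) = 0 := by
  obtain ⟨s, hs⟩ := Module.projective_def'.1 (inferInstance : Module.Projective P Ω)
  have hg : ∀ w : Ω, g w = (s w).sum fun b a => algebraMap P κ a * g b := by
    intro w
    conv_lhs => rw [← LinearMap.id_apply (R := P) w, ← hs]
    simp [Finsupp.linearCombination_apply, Finsupp.sum, map_sum, Algebra.smul_def]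
  classical
  let T : Finset Ω := Finset.univ.biUnion fun j => (s (ω j)).support
  have hg2 : ∀ j, g (ω j) = ∑ b ∈ T, algebraMap P κ (s (ω j) b) * g b := by
    intro j
    rw [hg]
    apply Finsupp.sum_of_support_subset
    · intro b hb
      exact Finset.mem_biUnion.2 ⟨j, Finset.mem_univ _, hb⟩
    · simp
  simp_rw [hg2, Finset.mul_sum]
  rw [Finset.sum_comm]
  apply Finset.sum_eq_zero
  intro b _
  have := h ((Finsupp.lapply b).comp s)
  have h3 := congrArg (· * g b) this
  simp only [Finset.sum_mul, zero_mul] at h3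
  rw [← h3]
  apply Finset.sum_congr rfl
  intro j _
  simp [mul_assoc]

lemma exists_det {κ : Type*} [Field κ] {r : ℕ} (S : Set (Fin r → κ))
    (h : ∀ c : Fin r → κ, (∀ v ∈ S, ∑ j, c j * v j = 0) → c = 0) :
    ∃ v : Fin r → (Fin r → κ), (∀ i, v i ∈ S) ∧ (Matrix.of v).det ≠ 0 := by
  have hspan : Submodule.span κ S = ⊤ := by
    by_contra hne
    obtain ⟨f, hf0, hf⟩ := Submodule.exists_le_ker_of_lt_top _ (lt_top_iff_ne_top.2 hne)
    apply hf0
    have hfv : ∀ v, f v = ∑ j, f (Pi.single j 1) * v j := by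
      intro v
      conv_lhs => rw [pi_eq_sum_univ' v]
      simp [map_sum, mul_comm]
    have := h (fun j => f (Pi.single j 1)) (fun v hv => by
      rw [← hfv]; exact hf (Submodule.subset_span hv))
    ext j
    simpa using congrFun this j
  obtain ⟨b, hbS, hb, hli⟩ := exists_linearIndependent κ S
  rw [hspan] at hb
  let B : Module.Basis b κ (Fin r → κ) := Module.Basis.mk hli (by simpa using hb.ge)
  have : Fintype b := FiniteDimensional.fintypeBasisIndex B
  have hcard : Fintype.card b = r := by
    rw [← Module.finrank_eq_card_basis B]; simp
  let e : Fin r ≃ b := (Fintype.equivFinOfCardEq hcard).symm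
  refine ⟨fun i => (e i : Fin r → κ), fun i => hbS (e i).2, ?_⟩
  have hli2 : LinearIndependent κ (Matrix.of fun i => (e i : Fin r → κ)).row :=
    hli.comp e e.injective
  have := Matrix.linearIndependent_rows_iff_isUnit.1 hli2
  rw [Matrix.isUnit_iff_isUnit_det] at this
  exact this.ne_zero

lemma exists_lin_map (k P R κ : Type*) [CommRing k] [CommRing P] [CommRing R] [CommRing κ]
    [Algebra k P] [Algebra k R] [Algebra P R] [Algebra R κ] [Algebra P κ] [IsScalarTower k P R]
    [IsScalarTower P R κ] (φ : (κ ⊗[R] Ω[R⁄k]) →ₗ[κ] κ) :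
    ∃ δ : Ω[P⁄k] →ₗ[P] κ, ∀ x, δ (KaehlerDifferential.D k P x)
      = φ (1 ⊗ₜ KaehlerDifferential.D k R (algebraMap P R x)) := by
  refine ⟨(((φ.restrictScalars R).comp (TensorProduct.mk R κ Ω[R⁄k] 1)).restrictScalars P).comp
          (KaehlerDifferential.map k k P R), fun x => ?_⟩
  simp

lemma exists_derivations (K : Type*) [Field K] {σ : Type*} (Q : Ideal (MvPolynomial σ K))
    [Q.IsPrime] {r : ℕ} (f : Fin r → MvPolynomial σ K) (hf : ∀ j, f j ∈ Q)
    (hind : ∀ a : Fin r → MvPolynomial σ K, (∃ s ∉ Q, s * ∑ j, a j * f j ∈ Q ^ 2) → ∀ j, a j ∈ Q) :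
    ∃ D : Fin r → Derivation ℤ (MvPolynomial σ K) (MvPolynomial σ K),
      (Matrix.of fun i j => D i (f j)).det ∉ Q := by
  obtain ⟨k, _, _, ⟨_⟩⟩ := exists_perfect_sub K
  let P := MvPolynomial σ K
  have : Algebra.FormallySmooth k K := formallySmooth_field k K
  have hP : Algebra.FormallySmooth k P := Algebra.FormallySmooth.comp k K P
  let R := Localization.AtPrime Q
  have : Algebra.FormallySmooth P R := Algebra.FormallySmooth.of_isLocalization Q.primeCompl
  have hR : Algebra.FormallySmooth k R := Algebra.FormallySmooth.comp k P R
  let κ := ResidueField R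
  have hκ : Algebra.FormallySmooth k κ := formallySmooth_field k κ
  have hs : Function.Surjective (algebraMap R κ) := residue_surjective
  have hinj := (Algebra.FormallySmooth.kerCotangentToTensor_injective_iff (R := k) hs).2
    inferInstance
  have hker : RingHom.ker (algebraMap R κ) = maximalIdeal R := ker_residue
  let v : Fin r → κ ⊗[R] Ω[R⁄k] := fun j => 1 ⊗ₜ D k R (algebraMap P R (f j))
  have hQmem : ∀ a : P, algebraMap P κ a = 0 ↔ a ∈ Q := by
    intro a
    rw [IsScalarTower.algebraMap_apply P R κ, ← RingHom.mem_ker, hker,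
      IsLocalization.AtPrime.to_map_mem_maximal_iff R Q]
  have hmemK : ∀ j, algebraMap P R (f j) ∈ RingHom.ker (algebraMap R κ) := by
    intro j
    rw [hker, IsLocalization.AtPrime.to_map_mem_maximal_iff R Q]; exact hf j
  have hv : LinearIndependent κ v := by
    rw [Fintype.linearIndependent_iff]
    intro c hc
    choose ρ hρ using fun j => hs (c j)
    obtain ⟨⟨t, ht⟩, hint⟩ := IsLocalization.exist_integer_multiples_of_finite Q.primeCompl ρ
    choose a ha using hint
    simp only at ha
    have hta : ∀ j, algebraMap P κ (a j) = algebraMap P κ t * c j := by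
      intro j
      rw [IsScalarTower.algebraMap_apply P R κ, ha, Algebra.smul_def, map_mul, hρ,
        ← IsScalarTower.algebraMap_apply P R κ]
    let y : RingHom.ker (algebraMap R κ) := ∑ j, algebraMap P R (a j) • ⟨_, hmemK j⟩
    have hy : kerCotangentToTensor k R κ (Ideal.toCotangent _ y) = 0 := by
      simp only [y, map_sum, map_smul]
      have h1 : ∀ j, algebraMap P R (a j) • kerCotangentToTensor k R κ
          (Ideal.toCotangent _ ⟨_, hmemK j⟩) = algebraMap P κ t • (c j • v j) := by
        intro j
        rw [kerCotangentToTensor_toCotangent, smul_smul, ← hta,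
          IsScalarTower.algebraMap_apply P R κ, ← algebraMap_smul κ]
      rw [Finset.sum_congr rfl (fun j _ => h1 j), ← Finset.smul_sum, hc, smul_zero]
    have hy2 := hinj (hy.trans (map_zero _).symm)
    rw [Ideal.toCotangent_eq_zero] at hy2
    replace hy2 : (y : R) ∈ maximalIdeal R ^ 2 := hker ▸ hy2
    have hyv : (y : R) = algebraMap P R (∑ j, a j * f j) := by
      
      rw [AddSubmonoidClass.coe_finsetSum, map_sum]
      exact Finset.sum_congr rfl fun j _ => (map_mul (algebraMap P R) _ _).symm
    rw [hyv, ← Localization.AtPrime.map_eq_maximalIdeal, ← Ideal.map_pow,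
      IsLocalization.algebraMap_mem_map_algebraMap_iff Q.primeCompl] at hy2
    obtain ⟨s, hs1, hs2⟩ := hy2
    have h3 := hind a ⟨s, hs1, hs2⟩
    intro j
    have h4 := hta j
    rw [(hQmem _).2 (h3 j)] at h4
    have ht0 : algebraMap P κ t ≠ 0 := fun h => ht ((hQmem _).1 h)
    exact (mul_eq_zero.1 h4.symm).resolve_left ht0
  obtain ⟨w, hwS, hdet⟩ := exists_det (κ := κ) (r := r)
    {w | ∃ D : Derivation k P P, w = fun j => algebraMap P κ (D (f j))} (by
      intro c hc
      have key := proj_key (P := P) (κ := κ) (fun j => KaehlerDifferential.D k P (f j)) c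
        (fun l => hc _ ⟨l.compDer (KaehlerDifferential.D k P), rfl⟩)
      ext j0
      obtain ⟨φ, hφ⟩ : ∃ φ : (κ ⊗[R] Ω[R⁄k]) →ₗ[κ] κ, ∀ j, φ (v j) = if j = j0 then 1 else 0 := by
        obtain ⟨ψ, hψ⟩ := LinearMap.exists_leftInverse_of_injective
          (Finsupp.linearCombination κ v) (LinearMap.ker_eq_bot.2 hv)
        refine ⟨(Finsupp.lapply j0).comp ψ, fun j => ?_⟩
        have := LinearMap.congr_fun hψ (Finsupp.single j 1)
        simp only [LinearMap.comp_apply, Finsupp.linearCombination_single, one_smul,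
          LinearMap.id_apply] at this
        rw [LinearMap.comp_apply, this, Finsupp.lapply_apply, Finsupp.single_apply]
      obtain ⟨δ, hδ⟩ := exists_lin_map k P R κ φ
      have := key δ
      have h5 : ∀ j, δ (KaehlerDifferential.D k P (f j)) = if j = j0 then 1 else 0 := by
        intro j
        rw [hδ]
        exact hφ j
      simpa [h5] using this)
  choose D hD using hwS
  refine ⟨fun i => (D i).restrictScalars ℤ, fun hmem => hdet ?_⟩
  rw [← hQmem, RingHom.map_det] at hmem
  rw [← hmem]
  congr 1
  ext i j
  simp [hD]

end Jac

section RegLoc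
open IsLocalRing

/-- A family in the maximal ideal with independent images in the cotangent space. -/
def Ind {R : Type*} [CommRing R] [IsLocalRing R] {r : ℕ} (f : Fin r → R) : Prop :=
  (∀ j, f j ∈ maximalIdeal R) ∧
    ∀ a : Fin r → R, ∑ j, a j * f j ∈ maximalIdeal R ^ 2 → ∀ j, a j ∈ maximalIdeal R

lemma Ind.li {R : Type*} [CommRing R] [IsLocalRing R] {r : ℕ} {f : Fin r → R} (h : Ind f) :
    LinearIndependent (ResidueField R)
      (fun j => (maximalIdeal R).toCotangent ⟨f j, h.1 j⟩ : Fin r → CotangentSpace R) := by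
  rw [Fintype.linearIndependent_iff]
  intro c hc
  choose a ha using fun j => residue_surjective (c j)
  have h1 : (maximalIdeal R).toCotangent (∑ j, a j • ⟨f j, h.1 j⟩) = 0 := by
    rw [map_sum, ← hc]
    refine Finset.sum_congr rfl fun j _ => ?_
    rw [map_smul, ← ha]
    exact (algebraMap_smul (ResidueField R) (a j) _).symm
  rw [Ideal.toCotangent_eq_zero, AddSubmonoidClass.coe_finsetSum] at h1
  intro j
  rw [← ha, residue_eq_zero_iff]
  exact h.2 a h1 j

lemma ind_of_li {R : Type*} [CommRing R] [IsLocalRing R] {r : ℕ} (f : Fin r → maximalIdeal R)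
    (h : LinearIndependent (ResidueField R)
      (fun j => (maximalIdeal R).toCotangent (f j) : Fin r → CotangentSpace R)) :
    Ind (fun j => (f j : R)) := by
  refine ⟨fun j => (f j).2, fun a ha j => ?_⟩
  rw [Fintype.linearIndependent_iff] at h
  rw [← residue_eq_zero_iff]
  refine h (fun j => residue R (a j)) ?_ j
  have h1 : (maximalIdeal R).toCotangent (∑ j, a j • f j) = 0 := by
    rw [Ideal.toCotangent_eq_zero, AddSubmonoidClass.coe_finsetSum]
    exact ha
  rw [map_sum] at h1
  rw [← h1]
  refine Finset.sum_congr rfl fun j _ => ?_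
  rw [map_smul]
  exact (algebraMap_smul (ResidueField R) (a j) _)

lemma exists_compl {R : Type*} [CommRing R] [IsLocalRing R] [IsNoetherianRing R] {r : ℕ}
    {f : Fin r → R} (h : Ind f) :
    ∃ (s : ℕ) (g : Fin s → R), r + s = (maximalIdeal R).spanFinrank ∧
      Ideal.span (Set.range f ∪ Set.range g) = maximalIdeal R := by
  let κ := ResidueField R
  let V := CotangentSpace R
  let v : Fin r → V := fun j => (maximalIdeal R).toCotangent ⟨f j, h.1 j⟩
  have hv : LinearIndependent κ v := h.li
  let W := Submodule.span κ (Set.range v)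
  have hW : Module.finrank κ W = r := by
    rw [finrank_span_eq_card hv]; simp
  obtain ⟨U, hU⟩ := Submodule.exists_isCompl W
  let b := Module.finBasis κ U
  choose g hg using fun j => Ideal.toCotangent_surjective (maximalIdeal R) ((b j : U) : V)
  refine ⟨Module.finrank κ U, fun j => (g j : R), ?_, ?_⟩
  · rw [spanFinrank_maximalIdeal_eq_finrank_cotangentSpace, ← hW]
    exact Submodule.finrank_add_eq_of_isCompl hU
  · have h1 := (CotangentSpace.span_image_eq_top_iff (R := R)
      (s := Set.range (fun j => (⟨f j, h.1 j⟩ : maximalIdeal R)) ∪ Set.range g)).1 (by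
        rw [Set.image_union, ← Set.range_comp, ← Set.range_comp, Submodule.span_union, eq_top_iff,
          ← hU.sup_eq_top]
        apply sup_le_sup le_rfl
        intro u hu
        have h2 : (⟨u, hu⟩ : U) ∈ Submodule.span κ (Set.range b) := by rw [b.span_eq]; trivial
        have h3 := Submodule.mem_map_of_mem (f := U.subtype) h2
        rw [Submodule.map_span, ← Set.range_comp] at h3
        have h4 : (fun j => (maximalIdeal R).toCotangent (g j)) = U.subtype ∘ b := by
          ext j; exact hg j
        have h5 : (⇑(maximalIdeal R).toCotangent ∘ g) = U.subtype ∘ b := h4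
        rw [h5]; exact h3)
    have h2 := congrArg (Submodule.map (maximalIdeal R).subtype) h1
    rw [Submodule.map_span, Submodule.map_subtype_top, Set.image_union, ← Set.range_comp,
      ← Set.range_comp] at h2
    exact h2

lemma quot_local {R : Type*} [CommRing R] [IsLocalRing R] (I : Ideal R) (hI : I ≤ maximalIdeal R) :
    IsLocalRing (R ⧸ I) := by
  have : Nontrivial (R ⧸ I) := Ideal.Quotient.nontrivial_iff.2
    (fun h => (maximalIdeal.isMaximal R).ne_top (top_le_iff.1 (h ▸ hI)))
  exact IsLocalRing.of_surjective' (Ideal.Quotient.mk I) Ideal.Quotient.mk_surjective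

lemma map_max {R : Type*} [CommRing R] [IsLocalRing R] (I : Ideal R) [IsLocalRing (R ⧸ I)] :
    (maximalIdeal R).map (Ideal.Quotient.mk I) = maximalIdeal (R ⧸ I) :=
  IsLocalRing.map_maximalIdeal_of_surjective _ Ideal.Quotient.mk_surjective

lemma span_le_max {R : Type*} [CommRing R] [IsLocalRing R] {r : ℕ} {f : Fin r → R}
    (h : Ind f) : Ideal.span (Set.range f) ≤ maximalIdeal R := by
  rw [Ideal.span_le]; rintro _ ⟨j, rfl⟩; exact h.1 j

lemma spanFinrank_le_fin {R : Type*} [CommRing R] {s : ℕ} (g : Fin s → R) :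
    (Ideal.span (Set.range g)).spanFinrank ≤ s := by
  refine (Submodule.spanFinrank_span_le_ncard_of_finite (Set.finite_range g)).trans ?_
  rw [← Set.image_univ]
  refine (Set.ncard_image_le (Set.toFinite _)).trans ?_
  simp

lemma exists_nat_dim {R : Type*} [CommRing R] [Nontrivial R] {s : ℕ} (h : ringKrullDim R ≤ s) :
    ∃ t : ℕ, ringKrullDim R = t := by
  have h0 : ringKrullDim R ≠ ⊥ := by
    intro hb
    have := ringKrullDim_nonneg_of_nontrivial (R := R)
    rw [hb] at this
    simp at this
  obtain ⟨u, hu⟩ := WithBot.ne_bot_iff_exists.1 h0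
  have h1 : u ≤ (s : ℕ∞) := by
    rw [← hu] at h; exact_mod_cast h
  obtain ⟨t, ht⟩ := ENat.ne_top_iff_exists.1 (ne_top_of_le_ne_top (ENat.natCast_ne_top s) h1)
  exact ⟨t, by rw [← hu, ← ht]; rfl⟩

lemma quot_regular {R : Type*} [CommRing R] [IsRegularLocalRing R] {r : ℕ}
    {f : Fin r → R} (h : Ind f) :
    IsRegularLocalRing (R ⧸ Ideal.span (Set.range f)) ∧
      ∃ s : ℕ, r + s = (maximalIdeal R).spanFinrank ∧
        ringKrullDim (R ⧸ Ideal.span (Set.range f)) = s := by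
  classical
  have hloc := quot_local _ (span_le_max h)
  obtain ⟨s, g, hs, hg⟩ := exists_compl h
  let I := Ideal.span (Set.range f)
  have h1 : maximalIdeal (R ⧸ I) = Ideal.span (Set.range (Ideal.Quotient.mk I ∘ g)) := by
    rw [← map_max, ← hg, Ideal.map_span, Set.image_union, Ideal.span_union, ← Set.range_comp,
      ← Set.range_comp, sup_eq_right, Ideal.span_le]
    rintro _ ⟨j, rfl⟩
    have : Ideal.Quotient.mk I (f j) = 0 :=
      Ideal.Quotient.eq_zero_iff_mem.2 (Ideal.subset_span ⟨j, rfl⟩)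
    simp only [Function.comp_apply, this]
    exact Ideal.zero_mem _
  have h2 : (maximalIdeal (R ⧸ I)).spanFinrank ≤ s := by
    rw [h1]; exact spanFinrank_le_fin _
  have h3 : ringKrullDim R ≤ ringKrullDim (R ⧸ I) + r := by
    have h4 := ringKrullDim_le_ringKrullDim_quotient_add_card (R := R)
      (s := Finset.univ.image f) (by
        rw [IsLocalRing.ringJacobson_eq_maximalIdeal]
        intro x hx
        simp only [Finset.coe_image, Finset.coe_univ, Set.image_univ] at hx
        obtain ⟨j, rfl⟩ := hx; exact h.1 j)
    rw [Finset.coe_image, Finset.coe_univ, Set.image_univ] at h4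
    refine h4.trans ?_
    gcongr
    exact Finset.card_image_le.trans (by simp)
  have h6 : ringKrullDim (R ⧸ I) ≤ s :=
    (ringKrullDim_le_spanFinrank_maximalIdeal (R ⧸ I)).trans (by exact_mod_cast h2)
  obtain ⟨t, ht⟩ := exists_nat_dim h6
  have h5 : (s : WithBot ℕ∞) ≤ ringKrullDim (R ⧸ I) := by
    rw [← IsRegularLocalRing.spanFinrank_maximalIdeal, ← hs, ht] at h3
    rw [ht]
    norm_cast at h3 ⊢
    omega
  exact ⟨IsRegularLocalRing.of_spanFinrank_maximalIdeal_le _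
    ((by exact_mod_cast h2 : ((maximalIdeal (R ⧸ I)).spanFinrank : WithBot ℕ∞) ≤ s).trans h5),
    s, hs, le_antisymm h6 h5⟩

lemma regular_isDomain (n : ℕ) : ∀ (R : Type*) [CommRing R] [IsRegularLocalRing R],
    (maximalIdeal R).spanFinrank = n → IsDomain R := by
  induction n with
  | zero =>
    intro R _ _ hn
    have hfg : (maximalIdeal R).FG := IsNoetherian.noetherian _
    have : maximalIdeal R = ⊥ := (Submodule.spanFinrank_eq_zero_iff_eq_bot hfg).1 hn
    have := IsLocalRing.isField_iff_maximalIdeal_eq.2 this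
    exact this.isDomain
  | succ n ih =>
    intro R _ _ hn
    have hdim : ringKrullDim R = (n + 1 : ℕ) := by
      rw [← IsRegularLocalRing.spanFinrank_maximalIdeal, hn]
    have hmp : (minimalPrimes R).Finite := minimalPrimes.finite_of_isNoetherianRing R
    obtain ⟨x, hxm, hx2, hxp⟩ : ∃ x ∈ maximalIdeal R, x ∉ maximalIdeal R ^ 2 ∧
        ∀ p ∈ minimalPrimes R, x ∉ p := by
      by_contra hcon
      push Not at hcon
      have hsub : ((maximalIdeal R : Ideal R) : Set R) ⊆
          ⋃ p ∈ (insert (maximalIdeal R ^ 2) (minimalPrimes R)), (p : Set R) := by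
        intro x hx
        by_cases h2 : x ∈ maximalIdeal R ^ 2
        · exact Set.mem_biUnion (Set.mem_insert _ _) h2
        · obtain ⟨p, hp, hxp⟩ := hcon x hx h2
          exact Set.mem_biUnion (Set.mem_insert_of_mem _ hp) hxp
      obtain ⟨p, hp, hle⟩ := (Ideal.subset_union_prime_finite (hmp.insert _)
        (f := id) (maximalIdeal R ^ 2) (maximalIdeal R ^ 2) (by
          rintro p hp h1 -
          exact Ideal.IsMinimalPrime.isPrime (hp.resolve_left h1))).1 hsub
      rcases hp with rfl | hp
      · have : maximalIdeal R = ⊥ := by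
          apply Submodule.eq_bot_of_le_smul_of_le_jacobson_bot (maximalIdeal R) _
            (IsNoetherian.noetherian _) _ (IsLocalRing.maximalIdeal_le_jacobson _)
          rw [smul_eq_mul, ← sq]; exact hle
        rw [this] at hn
        simp at hn
      · have hpp : p.IsPrime := Ideal.IsMinimalPrime.isPrime hp
        have hpm : p = maximalIdeal R := le_antisymm (IsLocalRing.le_maximalIdeal hpp.ne_top) hle
        have hh : (maximalIdeal R).height = 0 := by
          rw [← hpm, Ideal.height_eq_zero_iff]; exact hp
        have := IsLocalRing.maximalIdeal_height_eq_ringKrullDim (R := R)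
        rw [hh, hdim] at this
        norm_cast at this
    have hind : Ind (fun _ : Fin 1 => x) := by
      refine ⟨fun _ => hxm, fun a ha j => ?_⟩
      have hj : j = 0 := Subsingleton.elim _ _
      subst hj
      simp only [Finset.univ_unique, Finset.sum_singleton] at ha
      by_contra hu
      have hu : IsUnit (a 0) := by simpa using hu
      exact hx2 ((Ideal.unit_mul_mem_iff_mem _ hu).1 ha)
    obtain ⟨hreg, s, hs, hsd⟩ := quot_regular hind
    rw [hn] at hs
    have hdom := ih (R ⧸ Ideal.span (Set.range fun _ : Fin 1 => x)) (by
      have := IsRegularLocalRing.spanFinrank_maximalIdeal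
        (R := R ⧸ Ideal.span (Set.range fun _ : Fin 1 => x))
      rw [hsd] at this
      norm_cast at this
      omega)
    have hprime := (Ideal.Quotient.isDomain_iff_prime _).1 hdom
    rw [Set.range_const] at hprime
    obtain ⟨p, hp, hpx⟩ := Ideal.exists_minimalPrimes_le (bot_le : ⊥ ≤ Ideal.span {x})
    have hpp : p.IsPrime := Ideal.IsMinimalPrime.isPrime hp
    have hp0 : p = ⊥ := by
      apply Submodule.eq_bot_of_le_smul_of_le_jacobson_bot (maximalIdeal R) _
            (IsNoetherian.noetherian _) _ (IsLocalRing.maximalIdeal_le_jacobson _)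
      intro y hy
      obtain ⟨z, rfl⟩ := Ideal.mem_span_singleton'.1 (hpx hy)
      rw [mul_comm]
      exact Ideal.mul_mem_mul hxm ((hpp.mem_or_mem hy).resolve_right (hxp p hp))
    rw [hp0] at hpp
    exact (IsDomain.of_bot_isPrime R)

lemma exists_ind_span {R : Type*} [CommRing R] [IsRegularLocalRing R] (𝔞 : Ideal R)
    [hq : IsRegularLocalRing (R ⧸ 𝔞)] :
    ∃ (r : ℕ) (f : Fin r → R), Ind f ∧ 𝔞 = Ideal.span (Set.range f) := by
  have hne : 𝔞 ≠ ⊤ := Ideal.Quotient.nontrivial_iff.1 inferInstance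
  have hle : 𝔞 ≤ maximalIdeal R := IsLocalRing.le_maximalIdeal hne
  let κ := ResidueField R
  let S : Set (CotangentSpace R) :=
    (maximalIdeal R).toCotangent '' {x : maximalIdeal R | (x : R) ∈ 𝔞}
  obtain ⟨b, hbS, hb, hli⟩ := exists_linearIndependent κ S
  have : Finite b := hli.finite
  obtain ⟨r, ⟨e⟩⟩ := Finite.exists_equiv_fin b
  choose f hf hfe using fun j : Fin r => hbS (e.symm j).2
  have hfind : Ind (fun j => (f j : R)) := by
    apply ind_of_li
    simp only [hfe]
    exact hli.comp e.symm e.symm.injective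
  have hfb : Set.range (fun j => (maximalIdeal R).toCotangent (f j)) = b := by
    ext v
    constructor
    · rintro ⟨j, rfl⟩
      change (maximalIdeal R).toCotangent (f j) ∈ b
      rw [hfe]; exact (e.symm j).2
    · intro hv
      exact ⟨e ⟨v, hv⟩, by simp [hfe]⟩
  let I := Ideal.span (Set.range fun j => (f j : R))
  refine ⟨r, fun j => (f j : R), hfind, ?_⟩
  have hI𝔞 : I ≤ 𝔞 := by
    rw [Ideal.span_le]; rintro _ ⟨j, rfl⟩; exact hf j
  have h𝔞 : 𝔞 ≤ I ⊔ maximalIdeal R ^ 2 := by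
    intro a ha
    have h1 : (maximalIdeal R).toCotangent ⟨a, hle ha⟩ ∈ Submodule.span κ b := by
      rw [hb]; exact Submodule.subset_span ⟨⟨a, hle ha⟩, ha, rfl⟩
    rw [← Submodule.restrictScalars_mem R,
      Submodule.restrictScalars_span R κ residue_surjective, ← hfb] at h1
    have h2 : Set.range (fun j => (maximalIdeal R).toCotangent (f j))
      = (maximalIdeal R).toCotangent '' Set.range f := by rw [← Set.range_comp]; rfl
    rw [h2, ← Submodule.map_span] at h1
    obtain ⟨c, hc, hca⟩ := h1
    rw [Ideal.toCotangent_eq] at hca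
    have hcI : (c : R) ∈ I := by
      have := Submodule.mem_map_of_mem (f := (maximalIdeal R).subtype) hc
      rw [Submodule.map_span, ← Set.range_comp] at this
      exact this
    have : a = c - ((c : R) - a) := by ring
    rw [this]
    exact Ideal.sub_mem _ (Ideal.mem_sup_left hcI) (Ideal.mem_sup_right hca)
  obtain ⟨hreg, s, hs, hsd⟩ := quot_regular hfind
  have hdom : IsDomain (R ⧸ I) := regular_isDomain _ _ rfl
  by_contra hneq
  obtain ⟨a, ha, haI⟩ : ∃ a ∈ 𝔞, a ∉ I := by
    by_contra hcon
    push Not at hcon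
    exact hneq (le_antisymm hcon hI𝔞)
  have h1 := ringKrullDim_succ_le_of_surjective (Ideal.Quotient.factor hI𝔞)
    (Ideal.Quotient.factor_surjective hI𝔞) (r := Ideal.Quotient.mk I a)
    (mem_nonZeroDivisors_of_ne_zero (fun h => haI (Ideal.Quotient.eq_zero_iff_mem.1 h)))
    (by rw [Ideal.Quotient.factor_mk]; exact Ideal.Quotient.eq_zero_iff_mem.2 ha)
  rw [hsd, ← IsRegularLocalRing.spanFinrank_maximalIdeal] at h1
  norm_cast at h1
  -- generators
  have hfg : Submodule.FG (maximalIdeal (R ⧸ 𝔞)) := IsNoetherian.noetherian _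
  let t := (maximalIdeal (R ⧸ 𝔞)).spanFinrank
  let G := (maximalIdeal (R ⧸ 𝔞)).generators
  have hG : G.ncard = t := Submodule.FG.generators_ncard hfg
  have hGf : G.Finite := Submodule.FG.finite_generators hfg
  have hGs : Ideal.span G = maximalIdeal (R ⧸ 𝔞) := Submodule.span_generators _
  choose l hl using Ideal.Quotient.mk_surjective (I := 𝔞)
  have hm : maximalIdeal R ≤ Ideal.span ((Set.range fun j => (f j : R)) ∪ l '' G) ⊔
      maximalIdeal R • maximalIdeal R := by
    intro x hx
    have h2 : Ideal.Quotient.mk 𝔞 x ∈ (Ideal.span (l '' G)).map (Ideal.Quotient.mk 𝔞) := by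
      rw [Ideal.map_span, ← Set.image_comp]
      have : (Ideal.Quotient.mk 𝔞 ∘ l) '' G = G := by
        have : Ideal.Quotient.mk 𝔞 ∘ l = id := funext hl
        rw [this, Set.image_id]
      rw [this, hGs, ← map_max]
      exact Ideal.mem_map_of_mem _ hx
    obtain ⟨y, hy, hyx⟩ := (Ideal.mem_map_iff_of_surjective _ Ideal.Quotient.mk_surjective).1 h2
    have h3 : x - y ∈ 𝔞 := by
      rw [← Ideal.Quotient.eq_zero_iff_mem, map_sub, hyx, sub_self]
    have h4 := h𝔞 h3
    rw [sq] at h4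
    have h5 : x = (x - y) + y := by ring
    rw [h5, Ideal.span_union]
    refine Ideal.add_mem _ ?_ (Ideal.mem_sup_left (Ideal.mem_sup_right hy))
    exact (sup_le_sup_right (le_sup_left : I ≤ _) _) h4
  have hm2 : maximalIdeal R ≤ Ideal.span ((Set.range fun j => (f j : R)) ∪ l '' G) :=
    Submodule.le_of_le_smul_of_le_jacobson_bot (IsNoetherian.noetherian _)
      (IsLocalRing.maximalIdeal_le_jacobson _) hm
  have hm3 : Ideal.span ((Set.range fun j => (f j : R)) ∪ l '' G) ≤ maximalIdeal R := by
    rw [Ideal.span_le]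
    rintro x (⟨j, rfl⟩ | ⟨g, hg, rfl⟩)
    · exact (f j).2
    · have : g ∈ maximalIdeal (R ⧸ 𝔞) := by rw [← hGs]; exact Ideal.subset_span hg
      by_contra hu
      have hu : IsUnit (l g) := by simpa using hu
      have := hu.map (Ideal.Quotient.mk 𝔞)
      rw [hl] at this
      exact (IsLocalRing.mem_maximalIdeal _).1 ‹g ∈ _› this
  have hfin : ((Set.range fun j => (f j : R)) ∪ l '' G).Finite :=
    (Set.finite_range _).union (hGf.image _)
  have h6 := Submodule.spanFinrank_span_le_ncard_of_finite (R := R) hfin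
  have h7 : Submodule.span R ((Set.range fun j => (f j : R)) ∪ l '' G) = maximalIdeal R :=
    le_antisymm hm3 hm2
  rw [h7] at h6
  have h8 := Set.ncard_union_le (Set.range fun j => (f j : R)) (l '' G)
  have h9 : (Set.range fun j => (f j : R)).ncard ≤ r := by
    rw [← Set.image_univ]
    refine (Set.ncard_image_le (Set.toFinite _)).trans ?_
    simp
  have h10 : (l '' G).ncard ≤ t := (Set.ncard_image_le hGf).trans hG.le
  omega

end RegLoc

section RegOpen
open IsLocalRing

lemma ind_loc_iff {P : Type*} [CommRing P] (Q : Ideal P) [hQ : Q.IsPrime] {r : ℕ}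
    (F : Fin r → P) :
    Ind (fun j => algebraMap P (Localization.AtPrime Q) (F j)) ↔
      (∀ j, F j ∈ Q) ∧ ∀ a : Fin r → P, (∃ s ∉ Q, s * ∑ j, a j * F j ∈ Q ^ 2) → ∀ j, a j ∈ Q := by
  have hm : ∀ y, algebraMap P (Localization.AtPrime Q) y ∈
      maximalIdeal (Localization.AtPrime Q) ↔ y ∈ Q :=
    fun y => IsLocalization.AtPrime.to_map_mem_maximal_iff _ Q y
  have hm2 : ∀ y, algebraMap P (Localization.AtPrime Q) y ∈
      maximalIdeal (Localization.AtPrime Q) ^ 2 ↔ ∃ s ∉ Q, s * y ∈ Q ^ 2 := by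
    intro y
    rw [← Localization.AtPrime.map_eq_maximalIdeal, ← Ideal.map_pow,
      IsLocalization.algebraMap_mem_map_algebraMap_iff Q.primeCompl]
    rfl
  constructor
  · rintro ⟨h1, h2⟩
    refine ⟨fun j => (hm _).1 (h1 j), fun a ha j => ?_⟩
    rw [← hm]
    refine h2 (fun j => algebraMap _ _ (a j)) ?_ j
    simp only [← map_mul, ← map_sum]
    exact (hm2 _).2 ha
  · rintro ⟨h1, h2⟩
    refine ⟨fun j => (hm _).2 (h1 j), fun a ha j => ?_⟩
    obtain ⟨b, hb⟩ := IsLocalization.exist_integer_multiples_of_finite Q.primeCompl a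
    choose a' ha' using hb
    have h3 : ∀ j, a' j ∈ Q := by
      refine h2 a' ((hm2 _).1 ?_)
      have : algebraMap P (Localization.AtPrime Q) (∑ j, a' j * F j) =
          algebraMap P (Localization.AtPrime Q) b *
            ∑ j, a j * algebraMap P (Localization.AtPrime Q) (F j) := by
        rw [map_sum, Finset.mul_sum]
        refine Finset.sum_congr rfl fun j _ => ?_
        rw [map_mul, ha', Algebra.smul_def, mul_assoc]
      rw [this]
      exact Ideal.mul_mem_left _ _ ha
    have h4 := (hm _).2 (h3 j)
    rw [ha', Algebra.smul_def] at h4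
    exact (Ideal.unit_mul_mem_iff_mem _ (IsLocalization.map_units _ b)).1 h4

lemma crit_of_derivations {P : Type*} [CommRing P] (Q : Ideal P) [hQ : Q.IsPrime] {r : ℕ}
    (F : Fin r → P) (hF : ∀ j, F j ∈ Q) (D : Fin r → Derivation ℤ P P)
    (hdet : (Matrix.of fun i j => D i (F j)).det ∉ Q) (a : Fin r → P)
    (ha : ∃ s ∉ Q, s * ∑ j, a j * F j ∈ Q ^ 2) (j : Fin r) : a j ∈ Q := by
  obtain ⟨s, hs, ha⟩ := ha
  have hD : ∀ i, ∀ y ∈ Q ^ 2, D i y ∈ Q := by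
    intro i y hy
    rw [sq] at hy
    induction hy using Submodule.mul_induction_on' with
    | mem_mul_mem m hm n hn =>
      rw [Derivation.leibniz]
      exact Q.add_mem (Q.mul_mem_right _ hm) (Q.mul_mem_right _ hn)
    | add x _ y _ hx hy => rw [map_add]; exact Q.add_mem hx hy
  have h1 : ∀ i, ∑ j, D i (F j) * (s * a j) ∈ Q := by
    intro i
    have h2 := hD i _ ha
    have h3 : D i (s * ∑ j, a j * F j) = ∑ j, D i (F j) * (s * a j) +
        ∑ j, F j * D i (s * a j) := by
      rw [Finset.mul_sum, map_sum, ← Finset.sum_add_distrib]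
      refine Finset.sum_congr rfl fun j _ => ?_
      rw [← mul_assoc, Derivation.leibniz, smul_eq_mul, smul_eq_mul]
      ring
    rw [h3] at h2
    exact (Q.add_mem_iff_left (Q.sum_mem fun j _ => Q.mul_mem_right _ (hF j))).1 h2
  have hdom : IsDomain (P ⧸ Q) := Ideal.Quotient.isDomain Q
  have h4 : ((Matrix.of fun i j => D i (F j)).map (Ideal.Quotient.mk Q)).det ≠ 0 := by
    intro h
    apply hdet
    rw [← Ideal.Quotient.eq_zero_iff_mem, RingHom.map_det]
    exact h
  have h5 := Matrix.eq_zero_of_mulVec_eq_zero h4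
    (v := fun j => Ideal.Quotient.mk Q (s * a j)) (by
      ext i
      have := Ideal.Quotient.eq_zero_iff_mem.2 (h1 i)
      simpa [Matrix.mulVec, dotProduct] using this)
  have h6 := Ideal.Quotient.eq_zero_iff_mem.1 (congrFun h5 j)
  exact (hQ.mem_or_mem h6).resolve_left hs

lemma loc_equiv {P A : Type*} [CommRing P] [CommRing A] (φ : P →+* A)
    (hφ : Function.Surjective φ) (Q : Ideal A) [hQ : Q.IsPrime] :
    Nonempty ((Localization.AtPrime (Q.comap φ)) ⧸
      (RingHom.ker φ).map (algebraMap P (Localization.AtPrime (Q.comap φ))) ≃+*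
        Localization.AtPrime Q) := by
  let g := Localization.localRingHom (Q.comap φ) Q φ rfl
  have hT : Submonoid.map φ (Q.comap φ).primeCompl = Q.primeCompl := by
    ext x
    constructor
    · rintro ⟨y, hy, rfl⟩; exact hy
    · intro hx
      obtain ⟨y, rfl⟩ := hφ x
      exact ⟨y, hx, rfl⟩
  have hk : RingHom.ker g = (RingHom.ker φ).map (algebraMap P _) :=
    IsLocalization.ker_map (M := (Q.comap φ).primeCompl) (T := Q.primeCompl)
      (Localization.AtPrime Q) φ hT
  have hs : Function.Surjective g := by
    intro z
    obtain ⟨a, s, rfl⟩ := IsLocalization.exists_mk'_eq Q.primeCompl z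
    obtain ⟨x, rfl⟩ := hφ a
    obtain ⟨t, ht⟩ := hφ s
    have htm : t ∈ (Q.comap φ).primeCompl := by
      change φ t ∉ Q
      rw [ht]; exact s.2
    refine ⟨IsLocalization.mk' _ x ⟨t, htm⟩, ?_⟩
    rw [Localization.localRingHom_mk']
    congr 1
    exact Subtype.ext ht
  rw [← hk]
  exact ⟨RingHom.quotientKerEquivOfSurjective hs⟩

lemma exists_common_mul {P : Type*} [CommRing P] (q : Ideal P) [hq : q.IsPrime] (I N : Ideal P)
    (hI : I.FG) (h : ∀ x ∈ I, ∃ t ∉ q, t * x ∈ N) : ∃ t ∉ q, ∀ x ∈ I, t * x ∈ N := by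
  classical
  obtain ⟨S, rfl⟩ := hI
  choose t ht hx using fun x : S => h x (Ideal.subset_span x.2)
  refine ⟨∏ x, t x, ?_, ?_⟩
  · intro hp
    obtain ⟨x, -, hx⟩ := (hq.prod_mem_iff).1 hp
    exact ht x hx
  · intro x hxm
    have : Ideal.span (S : Set P) ≤ N.colon {∏ x, t x} := by
      rw [Ideal.span_le]
      intro y hy
      rw [SetLike.mem_coe, Submodule.mem_colon_singleton, smul_eq_mul,
        ← Finset.mul_prod_erase _ _ (Finset.mem_univ (⟨y, hy⟩ : S)), ← mul_assoc]
      apply N.mul_mem_right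
      rw [mul_comm]; exact hx ⟨y, hy⟩
    have := Submodule.mem_colon_singleton.1 (this hxm)
    rwa [smul_eq_mul, mul_comm] at this

lemma ind_unit_mul {R : Type*} [CommRing R] [IsLocalRing R] {r : ℕ} {f : Fin r → R}
    (h : Ind f) (u : Fin r → R) (hu : ∀ j, IsUnit (u j)) : Ind (fun j => f j * u j) := by
  refine ⟨fun j => Ideal.mul_mem_right _ _ (h.1 j), fun a ha j => ?_⟩
  have := h.2 (fun j => a j * u j) (by
    convert ha using 1
    exact Finset.sum_congr rfl fun j _ => by ring) j
  exact (Ideal.mul_unit_mem_iff_mem _ (hu j)).1 this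

lemma span_unit_mul {R : Type*} [CommRing R] {r : ℕ} (f : Fin r → R)
    (u : Fin r → R) (hu : ∀ j, IsUnit (u j)) :
    Ideal.span (Set.range f) = Ideal.span (Set.range fun j => f j * u j) := by
  apply le_antisymm
  · rw [Ideal.span_le]
    rintro _ ⟨j, rfl⟩
    exact (Ideal.mul_unit_mem_iff_mem _ (hu j)).1 (Ideal.subset_span ⟨j, rfl⟩)
  · rw [Ideal.span_le]
    rintro _ ⟨j, rfl⟩
    exact Ideal.mul_mem_right _ _ (Ideal.subset_span ⟨j, rfl⟩)

/-- Jacobian-type criterion: data near a regular point. -/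
lemma regular_data {P : Type*} [CommRing P] [IsRegularRing P] (I Q : Ideal P) [Q.IsPrime]
    (hreg : IsRegularLocalRing (Localization.AtPrime Q ⧸
      I.map (algebraMap P (Localization.AtPrime Q)))) :
    ∃ (r : ℕ) (F : Fin r → P), (∀ j, F j ∈ I) ∧
      Ind (fun j => algebraMap P (Localization.AtPrime Q) (F j)) ∧
      ∃ t ∉ Q, ∀ x ∈ I, t * x ∈ Ideal.span (Set.range F) := by
  obtain ⟨r, f, hf, hspan⟩ := exists_ind_span (I.map (algebraMap P (Localization.AtPrime Q)))
  have h1 : ∀ j, ∃ x : I × Q.primeCompl, f j * algebraMap P (Localization.AtPrime Q) x.2 =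
      algebraMap P (Localization.AtPrime Q) x.1 := fun j =>
    (IsLocalization.mem_map_algebraMap_iff Q.primeCompl _).1
      (hspan ▸ Ideal.subset_span ⟨j, rfl⟩)
  choose x hx using h1
  have hu : ∀ j, IsUnit (algebraMap P (Localization.AtPrime Q) ((x j).2 : P)) :=
    fun j => IsLocalization.map_units _ _
  refine ⟨r, fun j => (x j).1, fun j => (x j).1.2, ?_, ?_⟩
  · have := ind_unit_mul hf _ hu
    simpa only [hx] using this
  · apply exists_common_mul Q I _ (IsNoetherian.noetherian I)
    intro y hy
    have h2 : algebraMap P (Localization.AtPrime Q) y ∈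
        I.map (algebraMap P (Localization.AtPrime Q)) := Ideal.mem_map_of_mem _ hy
    rw [hspan, span_unit_mul f _ hu] at h2
    simp only [hx] at h2
    have h3 : (Set.range fun j => algebraMap P (Localization.AtPrime Q) ((x j).1 : P)) =
      algebraMap P (Localization.AtPrime Q) '' (Set.range fun j => ((x j).1 : P)) := by
      rw [← Set.range_comp]; rfl
    rw [h3, ← Ideal.map_span,
      IsLocalization.algebraMap_mem_map_algebraMap_iff Q.primeCompl] at h2
    exact h2

lemma regular_of_data {P : Type*} [CommRing P] [IsRegularRing P] (I Q : Ideal P) [Q.IsPrime]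
    (hIQ : I ≤ Q) {r : ℕ} (F : Fin r → P) (hF : ∀ j, F j ∈ I)
    (D : Fin r → Derivation ℤ P P) (hdet : (Matrix.of fun i j => D i (F j)).det ∉ Q)
    (t : P) (ht : t ∉ Q) (hI : ∀ x ∈ I, t * x ∈ Ideal.span (Set.range F)) :
    IsRegularLocalRing (Localization.AtPrime Q ⧸
      I.map (algebraMap P (Localization.AtPrime Q))) := by
  have hind := (ind_loc_iff Q F).2 ⟨fun j => hIQ (hF j),
    crit_of_derivations Q F (fun j => hIQ (hF j)) D hdet⟩
  have := (quot_regular hind).1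
  have h3 : (Set.range fun j => algebraMap P (Localization.AtPrime Q) (F j)) =
      algebraMap P (Localization.AtPrime Q) '' (Set.range F) := by
      rw [← Set.range_comp]; rfl
  rw [h3, ← Ideal.map_span] at this
  have h4 : (Ideal.span (Set.range F)).map (algebraMap P (Localization.AtPrime Q)) =
      I.map (algebraMap P (Localization.AtPrime Q)) := by
    apply le_antisymm
    · apply Ideal.map_mono
      rw [Ideal.span_le]
      rintro _ ⟨j, rfl⟩
      exact hF j
    · rw [Ideal.map_le_iff_le_comap]
      intro x hx
      rw [Ideal.mem_comap, IsLocalization.algebraMap_mem_map_algebraMap_iff Q.primeCompl]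
      exact ⟨t, ht, hI x hx⟩
  rwa [h4] at this

lemma regular_open (K A : Type*) [Field K] [CommRing A] [Algebra K A] [Algebra.FiniteType K A]
    (Q : Ideal A) [Q.IsPrime] (hreg : IsRegularLocalRing (Localization.AtPrime Q)) :
    ∃ h ∉ Q, ∀ (Q' : Ideal A) [Q'.IsPrime], h ∉ Q' →
      IsRegularLocalRing (Localization.AtPrime Q') := by
  obtain ⟨n, φ', hφ⟩ := Algebra.FiniteType.iff_quotient_mvPolynomial''.mp
    (inferInstance : Algebra.FiniteType K A)
  obtain ⟨φ, hφ⟩ : ∃ φ : MvPolynomial (Fin n) K →+* A, Function.Surjective φ := ⟨φ'.toRingHom, hφ⟩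
  obtain ⟨e⟩ := loc_equiv φ hφ Q
  have h1 := IsRegularLocalRing.of_ringEquiv e.symm
  obtain ⟨r, F, hF, hind, t, ht, hI⟩ := regular_data _ _ h1
  obtain ⟨hFQ, hind⟩ := (ind_loc_iff _ F).1 hind
  obtain ⟨D, hD⟩ := exists_derivations K (Q.comap φ) F hFQ hind
  refine ⟨φ (t * (Matrix.of fun i j => D i (F j)).det), ?_, ?_⟩
  · intro h
    have h : t * (Matrix.of fun i j => D i (F j)).det ∈ Q.comap φ := h
    rcases (inferInstance : (Q.comap φ).IsPrime).mem_or_mem h with h | h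
    · exact ht h
    · exact hD h
  · intro Q' _ hQ'
    have hQ' : t * (Matrix.of fun i j => D i (F j)).det ∉ Q'.comap φ := hQ'
    obtain ⟨e'⟩ := loc_equiv φ hφ Q'
    have := regular_of_data (RingHom.ker φ) (Q'.comap φ) (by
      intro x hx
      rw [Ideal.mem_comap, (RingHom.mem_ker).1 hx]; exact Q'.zero_mem) F hF D
      (fun h => hQ' (Ideal.mul_mem_left _ _ h)) t (fun h => hQ' (Ideal.mul_mem_right _ _ h)) hI
    exact IsRegularLocalRing.of_ringEquiv e'

lemma isRegularLocal_iff (R : Type*) [CommRing R] [IsLocalRing R] [IsNoetherianRing R] :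
    IsRegularLocal R ↔ IsRegularLocalRing R := by
  constructor
  · rintro ⟨-, s, hs, hc⟩
    apply IsRegularLocalRing.of_spanFinrank_maximalIdeal_le
    rw [← hc, ← hs]
    have := Submodule.spanFinrank_span_le_ncard_of_finite (R := R) s.finite_toSet
    rw [Set.ncard_coe_finset] at this
    exact_mod_cast this
  · intro h
    have hfg : Submodule.FG (maximalIdeal R) := IsNoetherian.noetherian _
    have hf := Submodule.FG.finite_generators hfg
    refine ⟨inferInstance, hf.toFinset, ?_, ?_⟩
    · rw [hf.coe_toFinset]; exact Submodule.span_generators _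
    · rw [← h.spanFinrank_maximalIdeal, ← Submodule.FG.generators_ncard hfg,
        Set.ncard_eq_toFinset_card _ hf]

lemma mem_singLocus_iff (K : Type*) {A : Type*} [Field K] [CommRing A] [Algebra K A]
    [Algebra.FiniteType K A] (Q : PrimeSpectrum A) :
    Q ∈ singLocus A ↔ singIdeal A ≤ Q.asIdeal := by
  have hN : IsNoetherianRing A := Algebra.FiniteType.isNoetherianRing K A
  constructor
  · intro h
    exact sInf_le ⟨Q, h, rfl⟩
  · intro h hreg
    obtain ⟨g, hg, hopen⟩ := regular_open K A Q.asIdeal ((isRegularLocal_iff _).1 hreg)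
    apply hg
    apply h
    rw [singIdeal, Submodule.mem_sInf]
    rintro _ ⟨P, hP, rfl⟩
    by_contra hgP
    exact hP ((isRegularLocal_iff _).2 (hopen P.asIdeal hgP))

end RegOpen

section Final
open IsLocalRing

lemma minimal_notMem_sing {A : Type*} [CommRing A] [IsReduced A] [IsNoetherianRing A]
    (P : PrimeSpectrum A) (hP : P.asIdeal ∈ minimalPrimes A) : P ∉ singLocus A := by
  intro h
  apply h
  have h0 : ringKrullDim (Localization.AtPrime P.asIdeal) = 0 := by
    rw [IsLocalization.AtPrime.ringKrullDim_eq_height P.asIdeal, Ideal.height_eq_zero_iff.2 hP]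
    rfl
  have : Ring.KrullDimLE 0 (Localization.AtPrime P.asIdeal) := by
    rw [Ring.krullDimLE_iff, h0]; rfl
  have hred : IsReduced (Localization.AtPrime P.asIdeal) :=
    inferInstance
  have hf : IsField (Localization.AtPrime P.asIdeal) := Ring.KrullDimLE.isField_of_isReduced
  refine ⟨inferInstance, ∅, ?_, ?_⟩
  · rw [IsLocalRing.isField_iff_maximalIdeal_eq.1 hf]; simp
  · rw [h0]; rfl

lemma exists_nzd {A : Type*} [CommRing A] [IsReduced A] [IsNoetherianRing A] (J : Ideal A)
    (hJ : ∀ p ∈ minimalPrimes A, ¬ J ≤ p) : ∃ d ∈ J, d ∈ A⁰ := by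
  have h := (not_congr (Ideal.subset_union_prime_finite (f := id)
    (minimalPrimes.finite_of_isNoetherianRing A) 0 0
    (fun p hp _ _ => Ideal.IsMinimalPrime.isPrime hp) (I := J))).2 (by
      rintro ⟨p, hp, hle⟩; exact hJ p hp hle)
  obtain ⟨d, hd, hd0⟩ := Set.not_subset.1 h
  refine ⟨d, hd, ?_⟩
  rw [mem_nonZeroDivisors_iff_right]
  intro x hx
  have : x ∈ (⊥ : Ideal A).radical := by
    rw [← Ideal.sInf_minimalPrimes, Submodule.mem_sInf]
    intro (p : Ideal A) hp
    have hpp : p.IsPrime := Ideal.IsMinimalPrime.isPrime hp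
    refine (hpp.mem_or_mem (x := x) (y := d) (by rw [hx]; exact p.zero_mem)).resolve_right ?_
    intro hdp
    exact hd0 (Set.mem_biUnion hp hdp)
  obtain ⟨n, hn⟩ := this
  exact eq_zero_of_pow_eq_zero hn

lemma s2_core {R : Type*} [CommRing R] (r1 r2 b c : R)
    (h : RingTheory.Sequence.IsRegular R [r1, r2]) (hb : b ∈ R⁰)
    (h1 : r1 * c ∈ Ideal.span {b}) (h2 : r2 * c ∈ Ideal.span {b}) : c ∈ Ideal.span {b} := by
  obtain ⟨hr1, h⟩ := (RingTheory.Sequence.isRegular_cons_iff _ _ _).1 h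
  obtain ⟨hr2, -⟩ := (RingTheory.Sequence.isRegular_cons_iff _ _ _).1 h
  obtain ⟨u, hu⟩ := Ideal.mem_span_singleton'.1 h1
  obtain ⟨v, hv⟩ := Ideal.mem_span_singleton'.1 h2
  have e : r1 * v = r2 * u := by
    have : (r1 * v - r2 * u) * b = 0 := by
      linear_combination r1 * hv - r2 * hu
    exact sub_eq_zero.1 ((mul_right_mem_nonZeroDivisors_eq_zero_iff hb).1 this)
  have h3 : (Submodule.Quotient.mk u : QuotSMulTop r1 R) = 0 := by
    apply hr2
    change r2 • _ = r2 • _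
    rw [smul_zero, ← Submodule.Quotient.mk_smul, Submodule.Quotient.mk_eq_zero, smul_eq_mul, ← e]
    exact Submodule.smul_mem_pointwise_smul v r1 ⊤ trivial
  rw [Submodule.Quotient.mk_eq_zero] at h3
  obtain ⟨w, -, hw⟩ := h3
  have hw : r1 * w = u := hw
  rw [Ideal.mem_span_singleton']
  refine ⟨w, hr1 ?_⟩
  change r1 * _ = r1 * _
  rw [← hu, ← hw]; ring

lemma s2_local {A : Type*} [CommRing A] (hS2 : SerreS2 A) (P : PrimeSpectrum A)
    (b c : A) (hb : b ∈ A⁰) (hP : ∀ y, y ∈ P.asIdeal ↔ y * c ∈ Ideal.span {b})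
    (hh : ¬ P.asIdeal.height ≤ 1) : False := by
  obtain ⟨rs, hlen, hm, hreg⟩ := hS2 P 2 le_rfl (by
    rw [IsLocalization.AtPrime.ringKrullDim_eq_height P.asIdeal]
    have : (2 : ℕ∞) ≤ P.asIdeal.height := by
      rw [not_le] at hh
      have := Order.add_one_le_of_lt hh
      rwa [one_add_one_eq_two] at this
    exact WithBot.coe_le_coe.2 this)
  match rs, hlen with
  | [r1, r2], _ =>
    have hbl : algebraMap A (Localization.AtPrime P.asIdeal) b ∈
        (Localization.AtPrime P.asIdeal)⁰ :=
      IsLocalization.map_nonZeroDivisors_le P.asIdeal.primeCompl _ (Submonoid.mem_map_of_mem _ hb)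
    have key : ∀ r ∈ maximalIdeal (Localization.AtPrime P.asIdeal),
        r * algebraMap A _ c ∈ Ideal.span {algebraMap A (Localization.AtPrime P.asIdeal) b} := by
      intro r hr
      rw [← Localization.AtPrime.map_eq_maximalIdeal,
        IsLocalization.mem_map_algebraMap_iff P.asIdeal.primeCompl] at hr
      obtain ⟨⟨y, s⟩, hys⟩ := hr
      dsimp only at hys
      obtain ⟨z, hz⟩ := Ideal.mem_span_singleton'.1 ((hP y).1 y.2)
      refine (Ideal.mul_unit_mem_iff_mem _ (IsLocalization.map_units
        (Localization.AtPrime P.asIdeal) s)).1 ?_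
      rw [Ideal.mem_span_singleton']
      refine ⟨algebraMap _ _ z, ?_⟩
      rw [← map_mul, hz, map_mul, ← hys]; ring
    have hc := s2_core r1 r2 _ _ hreg hbl (key r1 (hm r1 (by simp))) (key r2 (hm r2 (by simp)))
    have h3 : Ideal.span {algebraMap A (Localization.AtPrime P.asIdeal) b} =
        (Ideal.span {b}).map (algebraMap A _) := by rw [Ideal.map_span, Set.image_singleton]
    rw [h3, IsLocalization.algebraMap_mem_map_algebraMap_iff P.asIdeal.primeCompl] at hc
    obtain ⟨s, hs, hsc⟩ := hc
    exact hs ((hP s).2 hsc)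

lemma s2_sat {A : Type*} [CommRing A] [IsNoetherianRing A] (hS2 : SerreS2 A)
    (x : FractionRing A) (hx : ∀ q ∈ {q : Ideal A | q.IsPrime ∧ q.height ≤ 1}, ∃ s ∉ q,
      s • x ∈ (⊥ : Subalgebra A (FractionRing A))) : x ∈ (⊥ : Subalgebra A (FractionRing A)) := by
  obtain ⟨a, b, rfl⟩ := IsLocalization.exists_mk'_eq A⁰ x
  have hmem : ∀ s : A, s • IsLocalization.mk' (FractionRing A) a b ∈
      (⊥ : Subalgebra A (FractionRing A)) → s * a ∈ Ideal.span {(b : A)} := by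
    intro s hs
    obtain ⟨z, hz⟩ := Algebra.mem_bot.1 hs
    rw [Algebra.smul_def, IsLocalization.mul_mk'_eq_mk'_of_mul, eq_comm,
      IsLocalization.mk'_eq_iff_eq_mul, ← map_mul] at hz
    rw [IsFractionRing.injective A (FractionRing A) hz]
    exact Ideal.mul_mem_left _ _ (Ideal.subset_span rfl)
  by_cases ha : a ∈ Ideal.span {(b : A)}
  · obtain ⟨z, rfl⟩ := Ideal.mem_span_singleton'.1 ha
    rw [Algebra.mem_bot]
    refine ⟨z, ?_⟩
    rw [eq_comm, IsLocalization.mk'_eq_iff_eq_mul, ← map_mul]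
  · exfalso
    obtain ⟨P, hP, hle⟩ := exists_le_isAssociatedPrime_of_isNoetherianRing A
      (Ideal.Quotient.mk (Ideal.span {(b : A)}) a)
      (fun h => ha (Ideal.Quotient.eq_zero_iff_mem.1 h))
    obtain ⟨hPp, c', hc⟩ := isAssociatedPrime_iff.1 hP
    obtain ⟨c, rfl⟩ := Ideal.Quotient.mk_surjective c'
    have hcol : ∀ y e : A, y ∈ (⊥ : Submodule A (A ⧸ Ideal.span {(b : A)})).colon
        {Ideal.Quotient.mk (Ideal.span {(b : A)}) e} ↔ y * e ∈ Ideal.span {(b : A)} := by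
      intro y e
      rw [Submodule.mem_colon_singleton, Submodule.mem_bot, ← Ideal.Quotient.eq_zero_iff_mem]
      rfl
    by_cases hh : P.height ≤ 1
    · obtain ⟨s, hs, hsx⟩ := hx P ⟨hPp, hh⟩
      exact hs (hle ((hcol _ _).2 (hmem s hsx)))
    · exact s2_local hS2 ⟨P, hPp⟩ b c b.2 (fun y => by rw [← hcol, ← hc]) hh

end Final

section Assembly

lemma stab_loc {A : Type*} [CommRing A] [IsNoetherianRing A] (q : Ideal A) [hq : q.IsPrime]
    (I I' : Ideal A) (d : A) (hd : d ∈ I) (hd' : d ∈ I') (hd0 : d ∈ A⁰)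
    (hI : ∃ s ∉ q, ∀ a ∈ I, s * a ∈ I') (hI' : ∃ s ∉ q, ∀ a ∈ I', s * a ∈ I) (n : ℕ)
    (hst : chainRing A I' n = chainRing A I' (n + 1)) (x : FractionRing A)
    (hx : x ∈ chainRing A I (n + 1)) : ∃ s ∉ q, s • x ∈ chainRing A I n := by
  obtain ⟨s, hs, hsx⟩ := (chainRing_loc q I I' d hd hd' hd0 hI hI' (n + 1)).1 x hx
  rw [← hst] at hsx
  obtain ⟨t, ht, htx⟩ := (chainRing_loc q I I' d hd hd' hd0 hI hI' n).2 _ hsx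
  refine ⟨t * s, fun h => (hq.mem_or_mem h).elim ht hs, ?_⟩
  rwa [mul_smul]

lemma stab_loc_top {A : Type*} [CommRing A] [IsNoetherianRing A] (q : Ideal A) [hq : q.IsPrime]
    (I : Ideal A) (d : A) (hd : d ∈ I) (hd0 : d ∈ A⁰) (hI : ¬ I ≤ q) (n : ℕ) (x : FractionRing A)
    (hx : x ∈ chainRing A I (n + 1)) : ∃ s ∉ q, s • x ∈ chainRing A I n := by
  obtain ⟨t, ht, htq⟩ := SetLike.not_le_iff_exists.1 hI
  refine stab_loc q I ⊤ d hd trivial hd0 ⟨1, fun h => hq.ne_top ((Ideal.eq_top_iff_one _).2 h),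
    fun _ _ => trivial⟩ ⟨t, htq, fun a _ => I.mul_mem_right _ ht⟩ n ?_ x hx
  rw [chainRing_top, chainRing_top]

lemma sInf_loc {A : Type*} [CommRing A] [IsNoetherianRing A] (J q : Ideal A) [hq : q.IsPrime]
    (hJ : sInf J.minimalPrimes ≤ J) (T : Set (Ideal A))
    (hT : ∀ p ∈ J.minimalPrimes, p ≤ q → p ∈ T) : ∃ s ∉ q, ∀ a ∈ sInf T, s * a ∈ J := by
  classical
  have hfin := Ideal.finite_minimalPrimes_of_isNoetherianRing A J
  have h1 : ∀ p : Ideal A, ∃ s ∉ q, ¬ p ≤ q → s ∈ p := by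
    intro p
    by_cases hp : p ≤ q
    · exact ⟨1, fun h => hq.ne_top ((Ideal.eq_top_iff_one _).2 h), fun h => absurd hp h⟩
    · obtain ⟨s, hs, hsq⟩ := SetLike.not_le_iff_exists.1 hp
      exact ⟨s, hsq, fun _ => hs⟩
  choose f hf hfp using h1
  refine ⟨∏ p ∈ hfin.toFinset, f p, ?_, ?_⟩
  · intro h
    obtain ⟨p, -, hp⟩ := hq.prod_mem_iff.1 h
    exact hf p hp
  · intro a ha
    apply hJ
    rw [Submodule.mem_sInf]
    intro (p : Ideal A) hp
    by_cases hpq : p ≤ q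
    · exact p.mul_mem_left _ ((Submodule.mem_sInf.1 ha) p (hT p hp hpq))
    · apply p.mul_mem_right
      rw [← Finset.mul_prod_erase _ _ (hfin.mem_toFinset.2 hp)]
      exact p.mul_mem_right _ (hfp p hpq)

lemma mem_of_local {A : Type*} [CommRing A] (B : Subalgebra A (FractionRing A))
    (x : FractionRing A) (h : ∀ q : Ideal A, q.IsPrime → ∃ s ∉ q, s • x ∈ B) : x ∈ B := by
  let I : Ideal A := (Subalgebra.toSubmodule B).comap (LinearMap.toSpanSingleton A _ x)
  by_cases hI : I = ⊤
  · have : (1 : A) ∈ I := hI ▸ trivial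
    have : (1 : A) • x ∈ B := this
    rwa [one_smul] at this
  · obtain ⟨m, hm, hle⟩ := Ideal.exists_le_maximal I hI
    obtain ⟨s, hs, hsx⟩ := h m hm.isPrime
    exact absurd (hle (show s ∈ I from hsx)) hs

lemma LP_eq {A : Type*} [CommRing A]
    (hs : ∀ Q : PrimeSpectrum A, Q ∈ singLocus A ↔ singIdeal A ≤ Q.asIdeal)
    (P : PrimeSpectrum A) :
    LP A P = sInf {p | p ∈ (singIdeal A).minimalPrimes ∧ p ≤ P.asIdeal} := by
  apply le_antisymm
  · apply le_sInf
    rintro p ⟨hp, hpP⟩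
    exact sInf_le ⟨⟨p, Ideal.IsMinimalPrime.isPrime hp⟩, (hs _).2 hp.1.2, hpP, rfl⟩
  · apply le_sInf
    rintro _ ⟨Q, hQ, hQP, rfl⟩
    obtain ⟨p, hp, hpQ⟩ := Ideal.exists_minimalPrimes_le ((hs Q).1 hQ)
    have hmem : p ∈ {p | p ∈ (singIdeal A).minimalPrimes ∧ p ≤ P.asIdeal} :=
      ⟨hp, hpQ.trans hQP⟩
    exact (sInf_le hmem).trans hpQ

theorem main_aux (K : Type*) [Field K] (A : Type*) [CommRing A] [IsReduced A] [Algebra K A]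
    [Algebra.FiniteType K A] (hsing : (singLocus A).Nonempty) :
    nSteps A (singIdeal A) ≤ sSup {m : ℕ | ∃ P ∈ singLocus A, m = nSteps A (LP A P)} ∧
      (SerreS2 A → ∀ P ∈ singLocus A, nSteps A (LP A P) ≤ nSteps A (singIdeal A)) := by
  have hN : IsNoetherianRing A := Algebra.FiniteType.isNoetherianRing K A
  have hIC := noeth_integralClosure K A
  have hs : ∀ Q : PrimeSpectrum A, Q ∈ singLocus A ↔ singIdeal A ≤ Q.asIdeal :=
    mem_singLocus_iff K
  have hJmin : ∀ p ∈ minimalPrimes A, ¬ singIdeal A ≤ p := by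
    intro p hp hle
    exact minimal_notMem_sing ⟨p, Ideal.IsMinimalPrime.isPrime hp⟩ hp ((hs _).2 hle)
  obtain ⟨d, hd, hd0⟩ := exists_nzd (singIdeal A) hJmin
  have hfin := Ideal.finite_minimalPrimes_of_isNoetherianRing A (singIdeal A)
  have hJ : sInf (singIdeal A).minimalPrimes ≤ singIdeal A := by
    apply le_sInf
    rintro _ ⟨Q, hQ, rfl⟩
    obtain ⟨p, hp, hpQ⟩ := Ideal.exists_minimalPrimes_le ((hs Q).1 hQ)
    exact (sInf_le hp).trans hpQ
  have hJL : ∀ P, singIdeal A ≤ LP A P := by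
    intro P
    apply le_sInf
    rintro _ ⟨Q, hQ, -, rfl⟩
    exact (hs Q).1 hQ
  have hbdd : BddAbove {m : ℕ | ∃ P ∈ singLocus A, m = nSteps A (LP A P)} := by
    apply Set.Finite.bddAbove
    refine (hfin.finite_subsets.image (fun T => nSteps A (sInf T))).subset ?_
    rintro m ⟨P, hP, rfl⟩
    have hsub : {p | p ∈ (singIdeal A).minimalPrimes ∧ p ≤ P.asIdeal} ⊆
      (singIdeal A).minimalPrimes := fun p hp => hp.1
    exact ⟨_, hsub, by rw [LP_eq hs]⟩
  have hone : ∀ q : Ideal A, q.IsPrime → (1 : A) ∉ q := fun q hq h =>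
    hq.ne_top ((Ideal.eq_top_iff_one _).2 h)
  constructor
  · set N := sSup {m : ℕ | ∃ P ∈ singLocus A, m = nSteps A (LP A P)} with hNdef
    apply Nat.sInf_le
    refine le_antisymm (chainRing_mono _ (Nat.le_succ N)) ?_
    intro x hx
    apply mem_of_local
    intro q hq
    by_cases hqs : singIdeal A ≤ q
    · let P : PrimeSpectrum A := ⟨q, hq⟩
      have hP : P ∈ singLocus A := (hs P).2 hqs
      have hle : nSteps A (LP A P) ≤ N := le_csSup hbdd ⟨P, hP, rfl⟩
      have hst := chainRing_nSteps (LP A P) d (hJL P hd) hd0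
      refine stab_loc q _ (LP A P) d hd (hJL P hd) hd0
        ⟨1, hone q hq, fun a ha => by rw [one_mul]; exact hJL P ha⟩ ?_ N ?_ x hx
      · rw [LP_eq hs]
        exact sInf_loc _ q hJ _ fun p hp hpq => ⟨hp, hpq⟩
      · rw [chainRing_const _ hst hle, chainRing_const _ hst (hle.trans (Nat.le_succ N))]
    · exact stab_loc_top q _ d hd hd0 hqs N x hx
  · intro hS2 P hP
    apply Nat.sInf_le
    refine le_antisymm (chainRing_mono _ (Nat.le_succ _)) ?_
    intro x hx
    apply chainRing_sat _ {q : Ideal A | q.IsPrime ∧ q.height ≤ 1} (fun q hq => hq.1) (s2_sat hS2)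
    rintro q ⟨hq, hq1⟩
    by_cases hLq : LP A P ≤ q
    · -- any minimal prime of `J` below `q` is equal to `q`
      have hmin : ∀ p ∈ (singIdeal A).minimalPrimes, p ≤ q → p = q := by
        intro p hp hpq
        have hpp : p.IsPrime := Ideal.IsMinimalPrime.isPrime hp
        by_contra hne
        have hlt := Ideal.height_add_one_le_of_lt_of_isPrime (lt_of_le_of_ne hpq hne)
        have h0 : p.height = 0 := by
          have h1 := hlt.trans hq1
          by_contra h0
          have h2 : (1 : ℕ∞) ≤ p.height := Order.one_le_iff_pos.2 (pos_iff_ne_zero.2 h0)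
          have h3 : (1 : ℕ∞) + 1 ≤ 1 := (add_le_add_left h2 1).trans h1
          rw [one_add_one_eq_two] at h3
          exact absurd h3 (by decide)
        exact hJmin p (Ideal.height_eq_zero_iff.1 h0) hp.1.2
      rw [LP_eq hs] at hLq
      obtain ⟨p0, hp0, hp0q⟩ : ∃ p0 ∈ {p | p ∈ (singIdeal A).minimalPrimes ∧ p ≤ P.asIdeal},
          p0 ≤ q := by
        have hTf : {p | p ∈ (singIdeal A).minimalPrimes ∧ p ≤ P.asIdeal}.Finite :=
          hfin.subset fun p hp => hp.1
        have := (hq.inf_le' (s := hTf.toFinset) (f := id)).1 (by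
          refine le_trans ?_ hLq
          apply le_sInf
          intro p hp
          exact Finset.inf_le (f := id) (hTf.mem_toFinset.2 hp))
        obtain ⟨p, hp, hpq⟩ := this
        exact ⟨p, hTf.mem_toFinset.1 hp, hpq⟩
      have e0 := hmin p0 hp0.1 hp0q
      refine stab_loc q (LP A P) (singIdeal A) d (hJL P hd) hd hd0 ?_
        ⟨1, hone q hq, fun a ha => by rw [one_mul]; exact hJL P ha⟩ _
        (chainRing_nSteps _ d hd hd0) x hx
      rw [LP_eq hs]
      refine sInf_loc _ q hJ _ fun p hp hpq => ?_
      rw [hmin p hp hpq, ← e0]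
      exact hp0
    · exact stab_loc_top q _ d (hJL P hd) hd0 hLq _ x hx

end Assembly

/-- Let `K` be a field and `A` a reduced finitely generated
`K`-algebra which is not regular, and let `J` be the vanishing ideal of the singular
locus. Then `n(A, J) ≤ max_W n(A, L_W)`, the maximum running over the (finitely
many) strata `W` of `Sing(A)`; if moreover `A` is equidimensional and satisfies
`(S₂)`, then equality holds. Since `L_W = L_P` for any `P` in the stratum `W`, the
maximum over strata is the supremum of `n(A, L_P)` for `P ∈ Sing(A)`. -/
theorem nSteps_singIdeal_le_sup_strata
    (K : Type*) [Field K] (A : Type*) [CommRing A] [IsReduced A] [Algebra K A]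
    [Algebra.FiniteType K A] (hsing : (singLocus A).Nonempty) :
    nSteps A (singIdeal A) ≤ sSup {m : ℕ | ∃ P ∈ singLocus A, m = nSteps A (LP A P)} ∧
      (Equidimensional A → SerreS2 A →
        nSteps A (singIdeal A)
          = sSup {m : ℕ | ∃ P ∈ singLocus A, m = nSteps A (LP A P)}) := by
  obtain ⟨h1, h2⟩ := main_aux K A hsing
  refine ⟨h1, fun _ hS2 => le_antisymm h1 ?_⟩
  obtain ⟨P, hP⟩ := hsing
  refine csSup_le ⟨_, P, hP, rfl⟩ ?_
  rintro m ⟨Q, hQ, rfl⟩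
  exact h2 hS2 Q hQ
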